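/- arXiv:2601.18249 — 3 statements merged into one kernel-verified Lean document; each statement's English description precedes it below -/
import Mathlib

section
/- Let 𝕜 be an algebraically closed field of characteristic zero. Let Ω_1,…,Ω_d ∈ 𝕜[x,y,z] be homogeneous polynomials with isolated singularities whose degrees are pairwise distinct and each at least 5, let ξ_1,…,ξ_d ∈ 𝕜, and set P = P_{Ω_1−ξ_1} ⊗_𝕜 ⋯ ⊗_𝕜 P_{Ω_d−ξ_d}. Let w be an integer with w ≤ min_i deg Ω_i − 4, and let R = ⊕_{i≥0} R_i be an ℕ-graded Poisson 𝕜-algebra which is an integral domain, with R_0 = 𝕜·1, each R_i finite-dimensional over 𝕜, R generated as a 𝕜-algebra by R_1, and {R_1, R_1} ⊆ R_{w+2}. Then every injective Poisson 𝕜-algebra morphism f : P → P ⊗_𝕜 R satisfies im(f) = P ⊗ 𝕜·1. -/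
open scoped TensorProduct

/-- A Poisson bracket on a commutative algebra `A` over `𝕜`: a bilinear, antisymmetric
bracket satisfying the Jacobi identity and the Leibniz rule. -/
structure PoissonStructure (𝕜 A : Type*) [CommRing 𝕜] [CommRing A] [Algebra 𝕜 A] where
  bracket : A → A → A
  add_left : ∀ a b c : A, bracket (a + b) c = bracket a c + bracket b c
  smul_left : ∀ (r : 𝕜) (a b : A), bracket (r • a) b = r • bracket a b
  antisymm : ∀ a b : A, bracket a b = - bracket b a
  jacobi : ∀ a b c : A,
    bracket a (bracket b c) + bracket b (bracket c a) + bracket c (bracket a b) = 0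
  leibniz : ∀ a b c : A, bracket a (b * c) = bracket a b * c + b * bracket a c

/-- `f` is a morphism of Poisson algebras. -/
def IsPoissonHom {𝕜 A B : Type*} [CommRing 𝕜] [CommRing A] [CommRing B]
    [Algebra 𝕜 A] [Algebra 𝕜 B]
    (PA : PoissonStructure 𝕜 A) (PB : PoissonStructure 𝕜 B) (f : A →ₐ[𝕜] B) : Prop :=
  ∀ a b : A, f (PA.bracket a b) = PB.bracket (f a) (f b)

/-- A Poisson algebra is Dixmier if every injective Poisson endomorphism is bijective. -/
def IsDixmier (𝕜 A : Type*) [CommRing 𝕜] [CommRing A] [Algebra 𝕜 A]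
    (PA : PoissonStructure 𝕜 A) : Prop :=
  ∀ f : A →ₐ[𝕜] A, IsPoissonHom PA PA f → Function.Injective f → Function.Bijective f

/-- The tensor-product Poisson bracket on `A ⊗[𝕜] B`. -/
def IsTensorBracket {𝕜 A B : Type*} [CommRing 𝕜] [CommRing A] [CommRing B]
    [Algebra 𝕜 A] [Algebra 𝕜 B] (PA : PoissonStructure 𝕜 A) (PB : PoissonStructure 𝕜 B)
    (PT : PoissonStructure 𝕜 (A ⊗[𝕜] B)) : Prop :=
  ∀ (a a' : A) (b b' : B),
    PT.bracket (a ⊗ₜ[𝕜] b) (a' ⊗ₜ[𝕜] b') =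
      PA.bracket a a' ⊗ₜ[𝕜] (b * b') + (a * a') ⊗ₜ[𝕜] PB.bracket b b'

/-- `A` is `R`-Dixmier: every injective Poisson morphism `A → A ⊗ R` has image `A ⊗ 𝕜·1`. -/
def IsRelDixmier (𝕜 A R : Type*) [CommRing 𝕜] [CommRing A] [CommRing R]
    [Algebra 𝕜 A] [Algebra 𝕜 R] (PA : PoissonStructure 𝕜 A)
    (PT : PoissonStructure 𝕜 (A ⊗[𝕜] R)) : Prop :=
  ∀ f : A →ₐ[𝕜] A ⊗[𝕜] R, IsPoissonHom PA PT f → Function.Injective f →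
    Set.range f = Set.range fun a : A => a ⊗ₜ[𝕜] (1 : R)

/-- A Poisson algebra is Poisson simple if its only Poisson ideals are `0` and the whole ring. -/
def IsPoissonSimple {𝕜 A : Type*} [CommRing 𝕜] [CommRing A] [Algebra 𝕜 A]
    (PA : PoissonStructure 𝕜 A) : Prop :=
  ∀ I : Ideal A, (∀ x : A, ∀ y ∈ I, PA.bracket x y ∈ I) → I = ⊥ ∨ I = ⊤

open MvPolynomial in
/-- The Jacobian Poisson bracket with potential `Ω` on `𝕜[x,y,z]`. -/
noncomputable def jacBracket {𝕜 : Type*} [CommRing 𝕜]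
    (Ω f g : MvPolynomial (Fin 3) 𝕜) : MvPolynomial (Fin 3) 𝕜 :=
  Matrix.det (Matrix.of
    ![![pderiv 0 f, pderiv 1 f, pderiv 2 f],
      ![pderiv 0 g, pderiv 1 g, pderiv 2 g],
      ![pderiv 0 Ω, pderiv 1 Ω, pderiv 2 Ω]])

open MvPolynomial in
/-- `Ω` has an isolated singularity at the origin. -/
def HasIsolatedSingularity {𝕜 : Type*} [Field 𝕜] (Ω : MvPolynomial (Fin 3) 𝕜) : Prop :=
  FiniteDimensional 𝕜
    (MvPolynomial (Fin 3) 𝕜 ⧸ Ideal.span {pderiv (0 : Fin 3) Ω, pderiv 1 Ω, pderiv 2 Ω})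

/-- The underlying commutative algebra of `P_{Ω-ξ} = 𝕜[x,y,z]/(Ω-ξ)`. -/
def PQuot (𝕜 : Type*) [CommRing 𝕜] (Ω : MvPolynomial (Fin 3) 𝕜) (ξ : 𝕜) : Type _ :=
  MvPolynomial (Fin 3) 𝕜 ⧸ Ideal.span {Ω - MvPolynomial.C ξ}

noncomputable instance {𝕜 : Type*} [CommRing 𝕜] (Ω : MvPolynomial (Fin 3) 𝕜) (ξ : 𝕜) :
    CommRing (PQuot 𝕜 Ω ξ) :=
  inferInstanceAs (CommRing (MvPolynomial (Fin 3) 𝕜 ⧸ Ideal.span {Ω - MvPolynomial.C ξ}))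

noncomputable instance {𝕜 : Type*} [CommRing 𝕜] (Ω : MvPolynomial (Fin 3) 𝕜) (ξ : 𝕜) :
    Algebra 𝕜 (PQuot 𝕜 Ω ξ) :=
  inferInstanceAs (Algebra 𝕜 (MvPolynomial (Fin 3) 𝕜 ⧸ Ideal.span {Ω - MvPolynomial.C ξ}))

/-- The canonical (surjective) projection `𝕜[x,y,z] → P_{Ω-ξ}`. -/
noncomputable def PQuot.mk {𝕜 : Type*} [CommRing 𝕜] (Ω : MvPolynomial (Fin 3) 𝕜) (ξ : 𝕜)
    (f : MvPolynomial (Fin 3) 𝕜) : PQuot 𝕜 Ω ξ :=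
  Ideal.Quotient.mk (Ideal.span {Ω - MvPolynomial.C ξ}) f

/-- `P` is the Poisson bracket on `P_{Ω-ξ}` induced from the Jacobian bracket on `A_Ω`. -/
def IsInducedBracket {𝕜 : Type*} [CommRing 𝕜] (Ω : MvPolynomial (Fin 3) 𝕜) (ξ : 𝕜)
    (P : PoissonStructure 𝕜 (PQuot 𝕜 Ω ξ)) : Prop :=
  ∀ f g : MvPolynomial (Fin 3) 𝕜,
    P.bracket (PQuot.mk Ω ξ f) (PQuot.mk Ω ξ g) = PQuot.mk Ω ξ (jacBracket Ω f g)

open PiTensorProduct in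
/-- The Poisson bracket on a finite tensor product `⨂[𝕜] i, A i`. -/
def IsPiTensorBracket {𝕜 : Type*} [CommRing 𝕜] {d : ℕ} {A : Fin d → Type*}
    [∀ i, CommRing (A i)] [∀ i, Algebra 𝕜 (A i)]
    (P : ∀ i, PoissonStructure 𝕜 (A i))
    (PT : PoissonStructure 𝕜 (⨂[𝕜] i, A i)) : Prop :=
  ∀ a b : (i : Fin d) → A i,
    PT.bracket (⨂ₜ[𝕜] i, a i) (⨂ₜ[𝕜] i, b i) =
      ∑ i : Fin d,
        ⨂ₜ[𝕜] j, Function.update (fun j => a j * b j) i ((P i).bracket (a i) (b i)) j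

/-- The Poisson-torus bracket associated to a matrix `Λ` on the Laurent polynomial ring
`𝕜[x₁^{±1},…,xₙ^{±1}]`, realized as the group algebra of `ℤⁿ`:
`{x^u, x^v} = (Σ_{i,j} uᵢ λᵢⱼ vⱼ) x^{u+v}`. -/
def IsTorusBracket {𝕜 : Type*} [CommRing 𝕜] (n : ℕ) (Λ : Matrix (Fin n) (Fin n) 𝕜)
    (P : PoissonStructure 𝕜 (AddMonoidAlgebra 𝕜 (Fin n → ℤ))) : Prop :=
  ∀ u v : Fin n → ℤ,
    P.bracket (AddMonoidAlgebra.single u (1 : 𝕜)) (AddMonoidAlgebra.single v (1 : 𝕜)) =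
      (∑ i, ∑ j, (u i : 𝕜) * Λ i j * (v j : 𝕜)) • AddMonoidAlgebra.single (u + v) (1 : 𝕜)

/-- `ν : A → ℤ ∪ {∞}` is a `w`-valuation on the Poisson algebra `A`. -/
structure IsWValuation {𝕜 A : Type*} [CommRing 𝕜] [CommRing A] [Algebra 𝕜 A]
    (P : PoissonStructure 𝕜 A) (w : ℤ) (ν : A → WithTop ℤ) : Prop where
  eq_top_iff : ∀ a : A, ν a = ⊤ ↔ a = 0
  scalar : ∀ c : 𝕜, c ≠ 0 → ν (algebraMap 𝕜 A c) = 0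
  map_mul : ∀ a b : A, ν (a * b) = ν a + ν b
  map_add : ∀ a b : A, min (ν a) (ν b) ≤ ν (a + b)
  map_bracket : ∀ a b : A, ν a + ν b ≤ ν (P.bracket a b) + (w : WithTop ℤ)

section PolyPart
open MvPolynomial

variable {𝕜 : Type*} [Field 𝕜]

attribute [local instance] MvPolynomial.gradedAlgebra

/-- A linear map glued from a family of linear maps on homogeneous parts. -/
lemma exists_gradedConstr {M : Type*} [AddCommGroup M] [Module 𝕜 M]
    (T : ℕ → MvPolynomial (Fin 3) 𝕜 →ₗ[𝕜] M) :
    ∃ L : MvPolynomial (Fin 3) 𝕜 →ₗ[𝕜] M, ∀ c e, e.IsHomogeneous c → L e = T c e := by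
  refine ⟨(basisMonomials (Fin 3) 𝕜).constr 𝕜 (fun α => T α.degree (monomial α 1)), ?_⟩
  intro c e he
  have key : ∀ α ∈ e.support, ((basisMonomials (Fin 3) 𝕜).constr 𝕜
      (fun α => T α.degree (monomial α 1))) (monomial α (coeff α e))
      = T c (monomial α (coeff α e)) := by
    intro α hα
    have hd : α.degree = c := by
      by_contra h
      exact (mem_support_iff.1 hα) (he.coeff_eq_zero h)
    have h1 : monomial α (coeff α e) = coeff α e • (monomial α (1 : 𝕜)) := by
      rw [smul_monomial, smul_eq_mul, mul_one]
    rw [h1, map_smul, map_smul]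
    congr 1
    have := (basisMonomials (Fin 3) 𝕜).constr_basis 𝕜 (fun α => T α.degree (monomial α 1)) α
    rw [coe_basisMonomials] at this
    rw [this, hd]
  conv_lhs => rw [e.as_sum]
  conv_rhs => rw [e.as_sum]
  rw [map_sum, map_sum]
  exact Finset.sum_congr rfl key

/-- Linear maps agreeing on homogeneous polynomials agree. -/
lemma linearMap_ext_homog {M : Type*} [AddCommGroup M] [Module 𝕜 M]
    (L L' : MvPolynomial (Fin 3) 𝕜 →ₗ[𝕜] M)
    (h : ∀ c e, e.IsHomogeneous c → L e = L' e) (e : MvPolynomial (Fin 3) 𝕜) : L e = L' e := by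
  rw [← sum_homogeneousComponent e, map_sum, map_sum]
  exact Finset.sum_congr rfl fun c _ => h c _ (homogeneousComponent_isHomogeneous _ _)

/-- Graded left inverse of multiplication by `Ω`. -/
lemma exists_q (Ω : MvPolynomial (Fin 3) 𝕜) (n : ℕ) (hΩ : Ω.IsHomogeneous n) (h0 : Ω ≠ 0) :
    ∃ q : MvPolynomial (Fin 3) 𝕜 →ₗ[𝕜] MvPolynomial (Fin 3) 𝕜,
      (∀ h, q (Ω * h) = h) ∧
      (∀ c e, e.IsHomogeneous c → (q e).IsHomogeneous (c - n)) ∧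
      (∀ c e, e.IsHomogeneous c → c < n → q e = 0) := by
  obtain ⟨q0, hq0⟩ := LinearMap.exists_leftInverse_of_injective (LinearMap.mulLeft 𝕜 Ω)
    (by
      rw [LinearMap.ker_eq_bot]
      intro a b hab
      exact mul_left_cancel₀ h0 (by simpa using hab))
  have hq0' : ∀ h, q0 (Ω * h) = h := fun h => by
    simpa using LinearMap.congr_fun hq0 h
  obtain ⟨q, hq⟩ := exists_gradedConstr (𝕜 := 𝕜)
    (fun c => if n ≤ c then (homogeneousComponent (c - n)) ∘ₗ q0 else 0)
  refine ⟨q, ?_, ?_, ?_⟩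
  · intro h
    refine linearMap_ext_homog (q ∘ₗ LinearMap.mulLeft 𝕜 Ω) LinearMap.id ?_ h
    intro c e he
    have := hq (n + c) (Ω * e) (hΩ.mul he)
    simp only [LinearMap.comp_apply, LinearMap.mulLeft_apply, this]
    simp [hq0', homogeneousComponent_eq_self he]
  · intro c e he
    rw [hq c e he]
    split_ifs
    · exact homogeneousComponent_isHomogeneous _ _
    · exact isHomogeneous_zero _ _ _
  · intro c e he hc
    rw [hq c e he, if_neg (by omega)]
    rfl

/-- Powers of the variables lie in the Jacobian ideal. -/
lemma exists_pow_mem (Ω : MvPolynomial (Fin 3) 𝕜) (n : ℕ) (hΩ : Ω.IsHomogeneous n)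
    (hiso : HasIsolatedSingularity Ω) (k : Fin 3) :
    ∃ N, (X k : MvPolynomial (Fin 3) 𝕜) ^ N ∈
      Ideal.span {pderiv (0 : Fin 3) Ω, pderiv 1 Ω, pderiv 2 Ω} := by
  set I := Ideal.span {pderiv (0 : Fin 3) Ω, pderiv 1 Ω, pderiv 2 Ω} with hI
  have hfd : FiniteDimensional 𝕜 (MvPolynomial (Fin 3) 𝕜 ⧸ I) := hiso
  have hIhom : I.IsHomogeneous (homogeneousSubmodule (Fin 3) 𝕜) := by
    apply Ideal.homogeneous_span
    intro x hx
    simp only [Set.mem_insert_iff, Set.mem_singleton_iff] at hx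
    rcases hx with rfl | rfl | rfl <;> exact ⟨n - 1, hΩ.pderiv⟩
  have hint : IsIntegral 𝕜 (Ideal.Quotient.mk I (X k)) := IsIntegral.of_finite 𝕜 _
  obtain ⟨p, hp, hp0⟩ := hint
  have hmem : Polynomial.aeval (X k : MvPolynomial (Fin 3) 𝕜) p ∈ I := by
    rw [← Ideal.Quotient.eq_zero_iff_mem]
    rw [← hp0, ← Polynomial.aeval_def]
    exact (Polynomial.aeval_algHom_apply (Ideal.Quotient.mkₐ 𝕜 I) (X k) p).symm
  refine ⟨p.natDegree, ?_⟩
  have h2 := homogeneousComponent_mem_of_mem hIhom hmem p.natDegree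
  convert h2 using 1
  rw [Polynomial.aeval_eq_sum_range, map_sum, Finset.sum_eq_single p.natDegree]
  · rw [map_smul, homogeneousComponent_eq_self (isHomogeneous_X_pow k _), hp.coeff_natDegree,
      one_smul]
  · intro j _ hj
    rw [map_smul, homogeneousComponent_of_mem (isHomogeneous_X_pow k _), if_neg hj.symm, smul_zero]
  · intro h
    simp at h

lemma exists_pow_eq (Ω : MvPolynomial (Fin 3) 𝕜) (n : ℕ) (hΩ : Ω.IsHomogeneous n)
    (hiso : HasIsolatedSingularity Ω) (k : Fin 3) :
    ∃ (N : ℕ) (c : Fin 3 → MvPolynomial (Fin 3) 𝕜), (∀ l, (c l).IsHomogeneous N) ∧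
      (X k : MvPolynomial (Fin 3) 𝕜) ^ (N + (n - 1)) = ∑ l, c l * pderiv l Ω := by
  obtain ⟨N, hN⟩ := exists_pow_mem Ω n hΩ hiso k
  have hN' := Ideal.mul_mem_left _ (X k ^ (n - 1)) hN
  rw [← pow_add, add_comm] at hN'
  rw [Ideal.mem_span_insert] at hN'
  obtain ⟨a, z, hz, h1⟩ := hN'
  rw [Ideal.mem_span_pair] at hz
  obtain ⟨b, c, h2⟩ := hz
  refine ⟨N, fun l => homogeneousComponent N (![a, b, c] l),
    fun l => homogeneousComponent_isHomogeneous _ _, ?_⟩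
  have comp : ∀ (g : MvPolynomial (Fin 3) 𝕜) (l : Fin 3),
      homogeneousComponent (N + (n - 1)) (g * pderiv l Ω)
        = homogeneousComponent N g * pderiv l Ω := by
    intro g l
    refine linearMap_ext_homog
      (homogeneousComponent (N + (n - 1)) ∘ₗ LinearMap.mulRight 𝕜 (pderiv l Ω))
      (LinearMap.mulRight 𝕜 (pderiv l Ω) ∘ₗ homogeneousComponent N) ?_ g
    intro c e he
    simp only [LinearMap.comp_apply, LinearMap.mulRight_apply]
    rw [homogeneousComponent_of_mem (he.mul hΩ.pderiv), homogeneousComponent_of_mem he]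
    by_cases hc : N = c
    · simp [hc]
    · rw [if_neg hc, if_neg (by omega), zero_mul]
  rw [Fin.sum_univ_three]
  rw [← homogeneousComponent_eq_self (isHomogeneous_X_pow (R := 𝕜) k (N + (n - 1))), h1, ← h2,
    map_add, map_add, comp, comp, comp]
  simp [add_assoc]

lemma omega_ne_zero (Ω : MvPolynomial (Fin 3) 𝕜) (n : ℕ) (hΩ : Ω.IsHomogeneous n)
    (hiso : HasIsolatedSingularity Ω) : Ω ≠ 0 := by
  rintro rfl
  obtain ⟨N, hN⟩ := exists_pow_mem 0 n hΩ hiso 0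
  simp at hN

lemma omega_squarefree (Ω : MvPolynomial (Fin 3) 𝕜) (n : ℕ) (hΩ : Ω.IsHomogeneous n)
    (hiso : HasIsolatedSingularity Ω) : Squarefree Ω := by
  rintro g ⟨u, hu⟩
  have hd : ∀ l, g ∣ pderiv l Ω := by
    intro l
    rw [hu, Derivation.leibniz, Derivation.leibniz]
    simp only [smul_eq_mul]
    refine dvd_add ⟨g * pderiv l u, by ring⟩ ⟨u * (pderiv l g + pderiv l g), by ring⟩
  have hle : ∀ x ∈ Ideal.span {pderiv (0 : Fin 3) Ω, pderiv 1 Ω, pderiv 2 Ω}, g ∣ x := by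
    intro x hx
    rw [← Ideal.mem_span_singleton]
    refine Ideal.span_le.2 ?_ hx
    intro y hy
    simp only [Set.mem_insert_iff, Set.mem_singleton_iff] at hy
    rw [SetLike.mem_coe, Ideal.mem_span_singleton]
    rcases hy with rfl | rfl | rfl <;> exact hd _
  obtain ⟨N, hN⟩ := exists_pow_mem Ω n hΩ hiso 0
  obtain ⟨M, hM⟩ := exists_pow_mem Ω n hΩ hiso 1
  have h1 := hle _ hN
  have h2 := hle _ hM
  have hp : Prime (X 0 : MvPolynomial (Fin 3) 𝕜) := X_prime
  obtain ⟨j, _, hj⟩ := (dvd_prime_pow hp N).1 h1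
  rcases Nat.eq_zero_or_pos j with rfl | hj0
  · rw [pow_zero] at hj
    exact associated_one_iff_isUnit.1 hj
  · exfalso
    have : (X 0 : MvPolynomial (Fin 3) 𝕜) ∣ X 1 ^ M :=
      (dvd_pow_self _ hj0.ne').trans (hj.symm.dvd.trans h2)
    have := hp.dvd_of_dvd_pow this
    rw [X_dvd_X] at this
    simp at this

lemma dvd_of_vanish [IsAlgClosed 𝕜] (Ω : MvPolynomial (Fin 3) 𝕜) (n : ℕ) (hΩ : Ω.IsHomogeneous n)
    (hiso : HasIsolatedSingularity Ω) (e : MvPolynomial (Fin 3) 𝕜)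
    (he : ∀ p : Fin 3 → 𝕜, eval p Ω = 0 → eval p e = 0) : Ω ∣ e := by
  have h : e ∈ (Ideal.span {Ω}).radical := by
    rw [← vanishingIdeal_zeroLocus_eq_radical (K := 𝕜)]
    rw [mem_vanishingIdeal_iff]
    intro p hp
    rw [mem_zeroLocus_iff] at hp
    have := hp Ω (Ideal.mem_span_singleton_self Ω)
    exact he p this
  obtain ⟨N, hN⟩ := h
  rw [Ideal.mem_span_singleton] at hN
  exact (omega_squarefree Ω n hΩ hiso).isRadical N e hN

end PolyPart

section QuotPart
open MvPolynomial

variable {𝕜 : Type*} [Field 𝕜]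

/-- `PQuot.mk` as an algebra homomorphism. -/
noncomputable def mkA (Ω : MvPolynomial (Fin 3) 𝕜) (ξ : 𝕜) :
    MvPolynomial (Fin 3) 𝕜 →ₐ[𝕜] PQuot 𝕜 Ω ξ :=
  Ideal.Quotient.mkₐ 𝕜 (Ideal.span {Ω - C ξ})

lemma mkA_apply (Ω : MvPolynomial (Fin 3) 𝕜) (ξ : 𝕜) (e : MvPolynomial (Fin 3) 𝕜) :
    mkA Ω ξ e = PQuot.mk Ω ξ e := rfl

lemma mkA_surjective (Ω : MvPolynomial (Fin 3) 𝕜) (ξ : 𝕜) :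
    Function.Surjective (mkA Ω ξ) := Ideal.Quotient.mk_surjective

lemma mkA_eq_zero_iff (Ω : MvPolynomial (Fin 3) 𝕜) (ξ : 𝕜) (e : MvPolynomial (Fin 3) 𝕜) :
    mkA Ω ξ e = 0 ↔ ∃ h, e = (Ω - C ξ) * h := by
  have : mkA Ω ξ e = 0 ↔ e ∈ Ideal.span {Ω - C ξ} := Ideal.Quotient.eq_zero_iff_mem
  rw [this, Ideal.mem_span_singleton]
  rfl

lemma exists_liftQuot {M : Type*} [AddCommGroup M] [Module 𝕜 M]
    (Ω : MvPolynomial (Fin 3) 𝕜) (ξ : 𝕜) (L : MvPolynomial (Fin 3) 𝕜 →ₗ[𝕜] M)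
    (hL : ∀ h, L (Ω * h) = ξ • L h) :
    ∃ L' : PQuot 𝕜 Ω ξ →ₗ[𝕜] M, ∀ e, L' (mkA Ω ξ e) = L e := by
  obtain ⟨s, hs⟩ := LinearMap.exists_rightInverse_of_surjective (mkA Ω ξ).toLinearMap
    (LinearMap.range_eq_top.2 (mkA_surjective Ω ξ))
  refine ⟨L ∘ₗ s, fun e => ?_⟩
  have h1 : mkA Ω ξ (s (mkA Ω ξ e)) = mkA Ω ξ e := LinearMap.congr_fun hs (mkA Ω ξ e)
  have h2 : mkA Ω ξ (s (mkA Ω ξ e) - e) = 0 := by rw [map_sub, h1, sub_self]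
  obtain ⟨h, hh⟩ := (mkA_eq_zero_iff _ _ _).1 h2
  have h3 : L ((Ω - C ξ) * h) = 0 := by
    rw [sub_mul, map_sub, hL, ← smul_eq_C_mul, map_smul, sub_self]
  rw [← hh, map_sub, sub_eq_zero] at h3
  exact h3

/-- The comparison map from the graded quotient to the filtered one. -/
lemma exists_kappa (Ω : MvPolynomial (Fin 3) 𝕜) (n : ℕ) (hΩ : Ω.IsHomogeneous n) (h0 : Ω ≠ 0)
    (hn : 0 < n) (ξ : 𝕜) :
    ∃ κ : PQuot 𝕜 Ω 0 →ₗ[𝕜] PQuot 𝕜 Ω ξ, ∀ c e, e.IsHomogeneous c →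
      ∃ e' c', κ (mkA Ω 0 e) = mkA Ω ξ e + mkA Ω ξ e' ∧ e'.IsHomogeneous c' ∧
        (c' < c ∨ e' = 0) := by
  obtain ⟨q, hq1, hq2, hq3⟩ := exists_q Ω n hΩ h0
  obtain ⟨κ, hκ⟩ := exists_liftQuot Ω 0
    ((mkA Ω ξ).toLinearMap ∘ₗ (LinearMap.id - ξ • q)) (by
      intro h
      rw [zero_smul]
      simp only [LinearMap.comp_apply, LinearMap.sub_apply, LinearMap.id_apply,
        LinearMap.smul_apply, hq1, AlgHom.toLinearMap_apply]
      rw [mkA_eq_zero_iff]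
      exact ⟨h, by rw [sub_mul, smul_eq_C_mul]⟩)
  refine ⟨κ, fun c e he => ⟨-(ξ • q e), c - n, ?_, ?_, ?_⟩⟩
  · rw [hκ]
    simp [sub_eq_add_neg]
  · exact (((homogeneousSubmodule (Fin 3) 𝕜 (c - n)).smul_mem ξ (hq2 c e he) :)).neg
  · by_cases hc : c < n
    · right
      rw [hq3 c e he hc]
      simp
    · left
      omega

/-- The curve-at-infinity functional through a point `p` of the cone `Ω = 0`. -/
lemma exists_dl (Ω : MvPolynomial (Fin 3) 𝕜) (n : ℕ) (hΩ : Ω.IsHomogeneous n) (h0 : Ω ≠ 0)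
    (hn : 0 < n) (ξ : 𝕜) (a : ℕ) (ha : 0 < a) (p : Fin 3 → 𝕜) (hp : eval p Ω = 0) :
    ∃ dl : PQuot 𝕜 Ω ξ →ₗ[𝕜] Polynomial 𝕜, ∀ c e, e.IsHomogeneous c →
      (dl (mkA Ω ξ e)).natDegree ≤ a * c ∧ (dl (mkA Ω ξ e)).coeff (a * c) = eval p e := by
  obtain ⟨q, hq1, hq2, hq3⟩ := exists_q Ω n hΩ h0
  obtain ⟨T, hT⟩ := exists_gradedConstr (𝕜 := 𝕜) (M := Polynomial 𝕜)
    (fun c => (LinearMap.lsmul 𝕜 (Polynomial 𝕜)).flip (Polynomial.X ^ (a * c)) ∘ₗ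
      (aeval (R := 𝕜) p).toLinearMap)
  have hT' : ∀ c e, e.IsHomogeneous c → T e = (eval p e) • Polynomial.X ^ (a * c) := by
    intro c e he
    rw [hT c e he]
    simp [aeval_eq_eval]
  have hTΩ : ∀ h, T (Ω * h) = 0 := by
    intro h
    refine linearMap_ext_homog (T ∘ₗ LinearMap.mulLeft 𝕜 Ω) 0 ?_ h
    intro c e he
    simp only [LinearMap.comp_apply, LinearMap.mulLeft_apply, LinearMap.zero_apply]
    rw [hT' _ _ (hΩ.mul he), map_mul, hp, zero_mul, zero_smul]
  have hqk : ∀ k c e, e.IsHomogeneous c → ((q ^ k) e).IsHomogeneous (c - k * n) := by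
    intro k
    induction k with
    | zero => intro c e he; simpa using he
    | succ k ih =>
      intro c e he
      rw [pow_succ, Module.End.mul_apply]
      have := ih _ _ (hq2 c e he)
      rwa [Nat.sub_sub, show n + k * n = (k + 1) * n by ring] at this
  have hqk0 : ∀ k c e, e.IsHomogeneous c → c < k * n → (q ^ k) e = 0 := by
    intro k
    induction k with
    | zero => intro c e he h; omega
    | succ k ih =>
      intro c e he h
      rw [pow_succ, Module.End.mul_apply]
      by_cases hc : c < n
      · rw [hq3 c e he hc, map_zero]
      · refine ih _ _ (hq2 c e he) ?_
        rw [Nat.succ_mul] at h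
        omega
  obtain ⟨L, hL⟩ := exists_gradedConstr (𝕜 := 𝕜) (M := Polynomial 𝕜)
    (fun c => ∑ k ∈ Finset.range (c + 1), ξ ^ k • (T ∘ₗ (q ^ k)))
  have hL' : ∀ c e, e.IsHomogeneous c → ∀ M, c + 1 ≤ M →
      L e = ∑ k ∈ Finset.range M, ξ ^ k • T ((q ^ k) e) := by
    intro c e he M hM
    rw [hL c e he]
    simp only [LinearMap.sum_apply, LinearMap.smul_apply, LinearMap.comp_apply]
    refine Finset.sum_subset (Finset.range_mono hM) ?_
    intro k _ hk
    rw [Finset.mem_range, not_lt] at hk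
    rw [hqk0 k c e he (by nlinarith), map_zero, smul_zero]
  have hLΩ : ∀ h, L (Ω * h) = ξ • L h := by
    intro h
    refine linearMap_ext_homog (L ∘ₗ LinearMap.mulLeft 𝕜 Ω) (ξ • L) ?_ h
    intro c e he
    simp only [LinearMap.comp_apply, LinearMap.mulLeft_apply, LinearMap.smul_apply]
    rw [hL' _ _ (hΩ.mul he) (n + c + 1) le_rfl, Finset.sum_range_succ', hL' c e he (n + c) (by omega),
      Finset.smul_sum]
    simp only [pow_succ, Module.End.mul_apply, hq1, pow_zero, Module.End.one_apply, hTΩ, smul_zero,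
      add_zero, smul_smul, mul_comm ξ]
  obtain ⟨dl, hdl⟩ := exists_liftQuot Ω ξ L hLΩ
  have hterm : ∀ c e, e.IsHomogeneous c → ∀ k,
      (ξ ^ k • T ((q ^ k) e)).natDegree ≤ a * c ∧
        (k ≠ 0 → (ξ ^ k • T ((q ^ k) e)).coeff (a * c) = 0) := by
    intro c e he k
    by_cases hc : c < k * n
    · rw [hqk0 k c e he hc]
      simp
    · rw [hT' _ _ (hqk k c e he), smul_smul]
      constructor
      · refine (Polynomial.natDegree_smul_le _ _).trans ?_
        rw [Polynomial.natDegree_X_pow]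
        exact Nat.mul_le_mul_left _ (Nat.sub_le _ _)
      · intro hk
        rw [Polynomial.coeff_smul, Polynomial.coeff_X_pow, if_neg, smul_zero]
        intro hh
        have h1 := Nat.eq_of_mul_eq_mul_left ha hh
        have h2 : 0 < k * n := Nat.mul_pos (Nat.pos_of_ne_zero hk) hn
        omega
  refine ⟨dl, fun c e he => ?_⟩
  rw [hdl, hL' c e he (c + 1) le_rfl]
  constructor
  · exact Polynomial.natDegree_sum_le_of_forall_le _ _ fun k _ => (hterm c e he k).1
  · rw [Polynomial.finsetSum_coeff, Finset.sum_eq_single 0]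
    · rw [pow_zero, one_smul, pow_zero, Module.End.one_apply, hT' c e he]
      simp
    · intro k _ hk
      exact (hterm c e he k).2 hk
    · simp

end QuotPart

section TensorPart

variable {𝕜 : Type*} [Field 𝕜] {d : ℕ}

/-- Product of linear maps into a commutative algebra. -/
noncomputable def prodMap {M : Fin d → Type*} [∀ i, AddCommGroup (M i)] [∀ i, Module 𝕜 (M i)]
    {C : Type*} [CommRing C] [Algebra 𝕜 C] (φ : ∀ i, M i →ₗ[𝕜] C) : (⨂[𝕜] i, M i) →ₗ[𝕜] C :=
  PiTensorProduct.lift ((MultilinearMap.mkPiAlgebra 𝕜 (Fin d) C).compLinearMap φ)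

lemma prodMap_tprod {M : Fin d → Type*} [∀ i, AddCommGroup (M i)] [∀ i, Module 𝕜 (M i)]
    {C : Type*} [CommRing C] [Algebra 𝕜 C] (φ : ∀ i, M i →ₗ[𝕜] C) (m : ∀ i, M i) :
    prodMap φ (PiTensorProduct.tprod 𝕜 m) = ∏ i, φ i (m i) := by
  simp [prodMap]

lemma eq_zero_of_prodMap {M : Fin d → Type*} [∀ i, AddCommGroup (M i)] [∀ i, Module 𝕜 (M i)]
    (u : ⨂[𝕜] i, M i) (hu : ∀ φ : ∀ i, M i →ₗ[𝕜] 𝕜, prodMap φ u = 0) : u = 0 := by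
  classical
  let b := fun i => Module.Basis.ofVectorSpace 𝕜 (M i)
  let B := Basis.piTensorProduct b
  apply B.ext_elem
  intro p
  have h : B.coord p = prodMap (fun i => (b i).coord (p i)) := by
    apply B.ext
    intro q
    rw [Module.Basis.coord_apply, Module.Basis.repr_self, Basis.piTensorProduct_apply, prodMap_tprod]
    simp only [Module.Basis.coord_apply, Module.Basis.repr_self, Finsupp.single_apply]
    by_cases hqp : q = p
    · simp [hqp]
    · rw [if_neg hqp]
      obtain ⟨i, hi⟩ := Function.ne_iff.1 hqp
      exact (Finset.prod_eq_zero (Finset.mem_univ i) (if_neg hi)).symm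
  have h2 := hu (fun i => (b i).coord (p i))
  rw [← h, Module.Basis.coord_apply] at h2
  rw [h2, map_zero, Finsupp.zero_apply]

lemma eq_zero_of_separating {M : Fin d → Type*} [∀ i, AddCommGroup (M i)] [∀ i, Module 𝕜 (M i)]
    (Λ : ∀ i, Set (M i →ₗ[𝕜] 𝕜)) (hΛ : ∀ i (v : M i), (∀ l ∈ Λ i, l v = 0) → v = 0)
    (u : ⨂[𝕜] i, M i) (hu : ∀ φ : ∀ i, M i →ₗ[𝕜] 𝕜, (∀ i, φ i ∈ Λ i) → prodMap φ u = 0) :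
    u = 0 := by
  suffices H : ∀ T : Finset (Fin d), ∀ φ : ∀ i, M i →ₗ[𝕜] 𝕜, (∀ i, i ∉ T → φ i ∈ Λ i) →
      prodMap φ u = 0 by
    exact eq_zero_of_prodMap u fun φ => H Finset.univ φ (by simp)
  intro T
  induction T using Finset.induction_on with
  | empty => intro φ h; exact hu φ fun i => h i (by simp)
  | insert i T hi ih =>
    intro φ h
    -- contraction onto the i-th factor
    let ctr : (⨂[𝕜] j, M j) →ₗ[𝕜] M i := PiTensorProduct.lift
      { toFun := fun m => (∏ j ∈ Finset.univ.erase i, φ j (m j)) • m i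
        map_update_add' := by
          intro inst m j x y
          obtain rfl : inst = instDecidableEqFin d := Subsingleton.elim _ _
          by_cases hj : j = i
          · subst hj
            have : ∀ z, ∏ k ∈ Finset.univ.erase j, φ k (Function.update m j z k)
                = ∏ k ∈ Finset.univ.erase j, φ k (m k) := fun z =>
              Finset.prod_congr rfl fun k hk => by
                rw [Function.update_of_ne (Finset.ne_of_mem_erase hk)]
            simp [this]
          · have hm : j ∈ Finset.univ.erase i := by simp [hj]
            rw [Finset.prod_eq_mul_prod_sdiff_singleton_of_mem hm,
              Finset.prod_eq_mul_prod_sdiff_singleton_of_mem hm,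
              Finset.prod_eq_mul_prod_sdiff_singleton_of_mem hm]
            have : ∀ z, ∏ k ∈ Finset.univ.erase i \ {j}, φ k (Function.update m j z k)
                = ∏ k ∈ Finset.univ.erase i \ {j}, φ k (m k) := fun z =>
              Finset.prod_congr rfl fun k hk => by
                rw [Function.update_of_ne]
                simp at hk
                exact hk.2
            simp only [this, Function.update_self, Function.update_of_ne (Ne.symm hj), map_add,
              add_mul, add_smul]
        map_update_smul' := by
          intro inst m j c x
          obtain rfl : inst = instDecidableEqFin d := Subsingleton.elim _ _
          by_cases hj : j = i
          · subst hj
            have : ∀ z, ∏ k ∈ Finset.univ.erase j, φ k (Function.update m j z k)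
                = ∏ k ∈ Finset.univ.erase j, φ k (m k) := fun z =>
              Finset.prod_congr rfl fun k hk => by
                rw [Function.update_of_ne (Finset.ne_of_mem_erase hk)]
            simp [this, smul_comm c]
          · have hm : j ∈ Finset.univ.erase i := by simp [hj]
            rw [Finset.prod_eq_mul_prod_sdiff_singleton_of_mem hm,
              Finset.prod_eq_mul_prod_sdiff_singleton_of_mem hm]
            have : ∀ z, ∏ k ∈ Finset.univ.erase i \ {j}, φ k (Function.update m j z k)
                = ∏ k ∈ Finset.univ.erase i \ {j}, φ k (m k) := fun z =>
              Finset.prod_congr rfl fun k hk => by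
                rw [Function.update_of_ne]
                simp at hk
                exact hk.2
            simp only [this, Function.update_self, Function.update_of_ne (Ne.symm hj), map_smul,
              smul_eq_mul, mul_assoc, mul_smul] }
    have hctr : ∀ ψ : M i →ₗ[𝕜] 𝕜, prodMap (Function.update φ i ψ) = ψ ∘ₗ ctr := by
      intro ψ
      ext m
      simp only [LinearMap.compMultilinearMap_apply, prodMap_tprod, LinearMap.comp_apply, ctr,
        PiTensorProduct.lift.tprod, MultilinearMap.coe_mk, map_smul, smul_eq_mul]
      rw [← Finset.prod_erase_mul _ _ (Finset.mem_univ i)]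
      congr 1
      · exact Finset.prod_congr rfl fun k hk => by
          rw [Function.update_of_ne (Finset.ne_of_mem_erase hk)]
      · rw [Function.update_self]
    have hz : ctr u = 0 := by
      apply hΛ i
      intro l hl
      have := ih (Function.update φ i l) (by
        intro j hj
        by_cases hji : j = i
        · subst hji; rwa [Function.update_self]
        · rw [Function.update_of_ne hji]
          exact h j (by simp [hji, hj]))
      rwa [hctr] at this
    have := LinearMap.congr_fun (hctr (φ i)) u
    rw [Function.update_eq_self] at this
    rw [this, LinearMap.comp_apply, hz, map_zero]

/-- Evaluation of the left tensor factor. -/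
noncomputable def evR {U R : Type*} [AddCommGroup U] [Module 𝕜 U] [AddCommGroup R] [Module 𝕜 R]
    (φ : U →ₗ[𝕜] 𝕜) : U ⊗[𝕜] R →ₗ[𝕜] R :=
  (TensorProduct.lid 𝕜 R).toLinearMap ∘ₗ φ.rTensor R

lemma evR_tmul {U R : Type*} [AddCommGroup U] [Module 𝕜 U] [AddCommGroup R] [Module 𝕜 R]
    (φ : U →ₗ[𝕜] 𝕜) (u : U) (r : R) : evR φ (u ⊗ₜ[𝕜] r) = φ u • r := by
  simp [evR]

lemma eq_zero_of_separating_tensor {M : Fin d → Type*} [∀ i, AddCommGroup (M i)]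
    [∀ i, Module 𝕜 (M i)] {R : Type*} [AddCommGroup R] [Module 𝕜 R]
    (Λ : ∀ i, Set (M i →ₗ[𝕜] 𝕜)) (hΛ : ∀ i (v : M i), (∀ l ∈ Λ i, l v = 0) → v = 0)
    (z : (⨂[𝕜] i, M i) ⊗[𝕜] R)
    (hz : ∀ φ : ∀ i, M i →ₗ[𝕜] 𝕜, (∀ i, φ i ∈ Λ i) → evR (prodMap φ) z = 0) :
    z = 0 := by
  classical
  let b := Module.Basis.ofVectorSpace 𝕜 R
  have key : ∀ k, ((TensorProduct.rid 𝕜 (⨂[𝕜] i, M i)).toLinearMap ∘ₗ (b.coord k).lTensor (⨂[𝕜] i, M i)) z = 0 := by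
    intro k
    apply eq_zero_of_separating Λ hΛ
    intro φ hφ
    have h1 : prodMap φ ∘ₗ ((TensorProduct.rid 𝕜 (⨂[𝕜] i, M i)).toLinearMap ∘ₗ (b.coord k).lTensor (⨂[𝕜] i, M i))
        = b.coord k ∘ₗ evR (prodMap φ) := by
      apply TensorProduct.ext'
      intro u r
      simp [evR_tmul, mul_comm]
    have h2 := LinearMap.congr_fun h1 z
    rw [LinearMap.comp_apply] at h2
    rw [h2, LinearMap.comp_apply, hz φ hφ, map_zero]
  apply (TensorProduct.equivFinsuppOfBasisRight (M := ⨂[𝕜] i, M i) b).injective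
  rw [map_zero]
  ext k
  rw [Finsupp.zero_apply, ← key k]
  exact TensorProduct.equivFinsuppOfBasisRight_apply b z k

end TensorPart

section RPart

variable {𝕜 : Type*} [Field 𝕜] {R : Type*} [CommRing R] [Algebra 𝕜 R]

lemma exists_glue (ℛ : ℕ → Submodule 𝕜 R) (hdecomp : DirectSum.IsInternal ℛ)
    {M : Type*} [AddCommGroup M] [Module 𝕜 M] (T : ℕ → R →ₗ[𝕜] M) :
    ∃ L : R →ₗ[𝕜] M, ∀ j, ∀ r ∈ ℛ j, L r = T j r := by
  classical
  let eq := LinearEquiv.ofBijective (DirectSum.coeLinearMap ℛ) hdecomp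
  refine ⟨DirectSum.toModule 𝕜 ℕ M (fun j => T j ∘ₗ (ℛ j).subtype) ∘ₗ eq.symm.toLinearMap, ?_⟩
  intro j r hr
  have : eq.symm r = DirectSum.lof 𝕜 ℕ (fun j => ℛ j) j ⟨r, hr⟩ := by
    rw [LinearEquiv.symm_apply_eq]
    exact (DirectSum.coeLinearMap_lof ℛ j ⟨r, hr⟩).symm
  simp [this]

/-- Elements of degree at most `l`. -/
def RF (ℛ : ℕ → Submodule 𝕜 R) (l : ℕ) : Submodule 𝕜 R :=
  Submodule.span 𝕜 {r | ∃ j ≤ l, r ∈ ℛ j}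

lemma mem_RF {ℛ : ℕ → Submodule 𝕜 R} {l j : ℕ} (h : j ≤ l) {r : R} (hr : r ∈ ℛ j) : r ∈ RF ℛ l :=
  Submodule.subset_span ⟨j, h, hr⟩

lemma RF_mul {ℛ : ℕ → Submodule 𝕜 R}
    (hRmul : ∀ i j : ℕ, ∀ x ∈ ℛ i, ∀ y ∈ ℛ j, x * y ∈ ℛ (i + j))
    {l j : ℕ} {r s : R} (hr : r ∈ RF ℛ l) (hs : s ∈ ℛ j) : r * s ∈ RF ℛ (l + j) := by
  induction hr using Submodule.span_induction with
  | mem x hx =>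
    obtain ⟨i, hi, hx⟩ := hx
    exact mem_RF (by omega : i + j ≤ l + j) (hRmul _ _ _ hx _ hs)
  | zero => rw [zero_mul]; exact Submodule.zero_mem _
  | add x y _ _ hx hy => rw [add_mul]; exact Submodule.add_mem _ hx hy
  | smul c x _ hx => rw [smul_mul_assoc]; exact Submodule.smul_mem _ c hx

lemma pow_le_grade {ℛ : ℕ → Submodule 𝕜 R}
    (hR0 : ℛ 0 = Submodule.span 𝕜 {(1 : R)})
    (hRmul : ∀ i j : ℕ, ∀ x ∈ ℛ i, ∀ y ∈ ℛ j, x * y ∈ ℛ (i + j)) (j : ℕ) :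
    (ℛ 1) ^ j ≤ ℛ j := by
  induction j with
  | zero => rw [pow_zero, hR0, Submodule.one_eq_span]
  | succ j ih =>
    rw [pow_succ, Submodule.mul_le]
    intro m hm x hx
    exact hRmul _ _ _ (ih hm) _ hx

lemma grade_le_pow {ℛ : ℕ → Submodule 𝕜 R} (hdecomp : DirectSum.IsInternal ℛ)
    (hR0 : ℛ 0 = Submodule.span 𝕜 {(1 : R)})
    (hRmul : ∀ i j : ℕ, ∀ x ∈ ℛ i, ∀ y ∈ ℛ j, x * y ∈ ℛ (i + j))
    (hRgen : Algebra.adjoin 𝕜 (ℛ 1 : Set R) = ⊤) (j : ℕ) :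
    ℛ j ≤ (ℛ 1) ^ j := by
  obtain ⟨L, hL⟩ := exists_glue ℛ hdecomp (fun k => if k = j then LinearMap.id else 0)
  have key : ∀ x : R, L x ∈ (ℛ 1) ^ j := by
    intro x
    have hx : x ∈ Submodule.span 𝕜 (Submonoid.closure (ℛ 1 : Set R) : Set R) := by
      rw [← Algebra.adjoin_eq_span, hRgen]
      trivial
    induction hx using Submodule.span_induction with
    | mem x hx =>
      have : ∃ k, x ∈ (ℛ 1) ^ k := by
        induction hx using Submonoid.closure_induction with
        | mem x hx => exact ⟨1, by rwa [pow_one]⟩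
        | one => exact ⟨0, by rw [pow_zero]; exact Submodule.one_le.1 le_rfl⟩
        | mul x y _ _ hx hy =>
          obtain ⟨k, hk⟩ := hx
          obtain ⟨l, hl⟩ := hy
          exact ⟨k + l, by rw [pow_add]; exact Submodule.mul_mem_mul hk hl⟩
      obtain ⟨k, hk⟩ := this
      rw [hL k x (pow_le_grade hR0 hRmul k hk)]
      split_ifs with h
      · subst h; exact hk
      · exact Submodule.zero_mem _
    | zero => rw [map_zero]; exact Submodule.zero_mem _
    | add x y _ _ hx hy => rw [map_add]; exact Submodule.add_mem _ hx hy
    | smul c x _ hx => rw [map_smul]; exact Submodule.smul_mem _ c hx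
  intro x hx
  have := key x
  rwa [hL j x hx, if_pos rfl] at this

end RPart

section BracketBasics

variable {𝕜 : Type*} [Field 𝕜] {A : Type*} [CommRing A] [Algebra 𝕜 A] (PA : PoissonStructure 𝕜 A)

lemma PoissonStructure.bracket_one_right (a : A) : PA.bracket a 1 = 0 := by
  have := PA.leibniz a 1 1
  rw [mul_one, mul_one, one_mul] at this
  exact left_eq_add.1 this

lemma PoissonStructure.bracket_one_left (a : A) : PA.bracket 1 a = 0 := by
  rw [PA.antisymm, PA.bracket_one_right, neg_zero]

lemma PoissonStructure.add_right (a b c : A) :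
    PA.bracket a (b + c) = PA.bracket a b + PA.bracket a c := by
  rw [PA.antisymm, PA.add_left, PA.antisymm b, PA.antisymm c]
  ring

lemma PoissonStructure.smul_right (r : 𝕜) (a b : A) :
    PA.bracket a (r • b) = r • PA.bracket a b := by
  rw [PA.antisymm, PA.smul_left, PA.antisymm b, smul_neg, neg_neg]

lemma PoissonStructure.zero_left (a : A) : PA.bracket 0 a = 0 := by
  have := PA.smul_left 0 0 a
  simpa using this

lemma PoissonStructure.zero_right (a : A) : PA.bracket a 0 = 0 := by
  rw [PA.antisymm, PA.zero_left, neg_zero]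

/-- Bilinear control of the bracket on spans. -/
lemma PoissonStructure.bracket_mem_of_span {S T : Set A} {W : Submodule 𝕜 A}
    (h : ∀ x ∈ S, ∀ y ∈ T, PA.bracket x y ∈ W) {x y : A} (hx : x ∈ Submodule.span 𝕜 S)
    (hy : y ∈ Submodule.span 𝕜 T) : PA.bracket x y ∈ W := by
  induction hx using Submodule.span_induction with
  | mem x hx =>
    induction hy using Submodule.span_induction with
    | mem y hy => exact h x hx y hy
    | zero => rw [PA.zero_right]; exact W.zero_mem
    | add y z _ _ hy hz => rw [PA.add_right]; exact W.add_mem hy hz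
    | smul c y _ hy => rw [PA.smul_right]; exact W.smul_mem c hy
  | zero => rw [PA.zero_left]; exact W.zero_mem
  | add x z _ _ hx hz => rw [PA.add_left]; exact W.add_mem hx hz
  | smul c x _ hx => rw [PA.smul_left]; exact W.smul_mem c hx

end BracketBasics

section RBracket

variable {𝕜 : Type*} [Field 𝕜] {R : Type*} [CommRing R] [Algebra 𝕜 R]

lemma R_bracket_aux (PR : PoissonStructure 𝕜 R) {ℛ : ℕ → Submodule 𝕜 R}
    (hR0 : ℛ 0 = Submodule.span 𝕜 {(1 : R)})
    (hRmul : ∀ i j : ℕ, ∀ x ∈ ℛ i, ∀ y ∈ ℛ j, x * y ∈ ℛ (i + j))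
    (w0 k : ℕ) (t : R) (ht : ∀ x ∈ ℛ 1, PR.bracket t x ∈ RF ℛ (k + 1 + w0)) (j : ℕ) :
    ∀ r ∈ (ℛ 1) ^ j, PR.bracket t r ∈ RF ℛ (k + j + w0) := by
  induction j with
  | zero =>
    intro r hr
    rw [pow_zero, Submodule.mem_one] at hr
    obtain ⟨c, rfl⟩ := hr
    rw [Algebra.algebraMap_eq_smul_one, PR.smul_right, PR.bracket_one_right, smul_zero]
    exact Submodule.zero_mem _
  | succ j ih =>
    intro r hr
    rw [pow_succ] at hr
    induction hr using Submodule.mul_induction_on' with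
    | mem_mul_mem m hm x hx =>
      rw [PR.leibniz]
      refine Submodule.add_mem _ ?_ ?_
      · have := RF_mul hRmul (ih m hm) hx
        rwa [show k + j + w0 + 1 = k + (j + 1) + w0 by ring] at this
      · have := RF_mul hRmul (ht x hx) (pow_le_grade hR0 hRmul j hm)
        rw [mul_comm]
        rwa [show k + 1 + w0 + j = k + (j + 1) + w0 by ring] at this
    | add x _ y _ hx hy => rw [PR.add_right]; exact Submodule.add_mem _ hx hy

lemma R_bracket (PR : PoissonStructure 𝕜 R) {ℛ : ℕ → Submodule 𝕜 R}
    (hdecomp : DirectSum.IsInternal ℛ)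
    (hR0 : ℛ 0 = Submodule.span 𝕜 {(1 : R)})
    (hRmul : ∀ i j : ℕ, ∀ x ∈ ℛ i, ∀ y ∈ ℛ j, x * y ∈ ℛ (i + j))
    (hRgen : Algebra.adjoin 𝕜 (ℛ 1 : Set R) = ⊤)
    (w : ℤ) (w0 : ℕ) (hw0 : w ≤ w0)
    (hRbr : ∀ x ∈ ℛ 1, ∀ y ∈ ℛ 1,
      PR.bracket x y ∈ (if 0 ≤ w + 2 then ℛ (w + 2).toNat else ⊥)) (j k : ℕ) (r s : R)
    (hr : r ∈ ℛ j) (hs : s ∈ ℛ k) : PR.bracket r s ∈ RF ℛ (j + k + w0) := by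
  have base : ∀ x ∈ ℛ 1, ∀ y ∈ ℛ 1, PR.bracket x y ∈ RF ℛ (1 + 1 + w0) := by
    intro x hx y hy
    have := hRbr x hx y hy
    split_ifs at this with h
    · exact mem_RF (by omega) this
    · rw [Submodule.mem_bot] at this
      rw [this]; exact Submodule.zero_mem _
  have hr' := grade_le_pow hdecomp hR0 hRmul hRgen j hr
  have hs' := grade_le_pow hdecomp hR0 hRmul hRgen k hs
  refine R_bracket_aux PR hR0 hRmul w0 j r ?_ k s hs'
  intro x hx
  rw [PR.antisymm, add_comm j 1]
  exact Submodule.neg_mem _ (R_bracket_aux PR hR0 hRmul w0 1 x (base x hx) j r hr')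

end RBracket

section FiltGeneral

variable {𝕜 : Type*} [Field 𝕜] {A : Type*} [CommRing A] [Algebra 𝕜 A]

lemma filt_pow {F : ℕ → Submodule 𝕜 A} (h1 : (1 : A) ∈ F 0)
    (hmul : ∀ m m' x y, x ∈ F m → y ∈ F m' → x * y ∈ F (m + m')) {m : ℕ} {x : A}
    (hx : x ∈ F m) (N : ℕ) : x ^ N ∈ F (N * m) := by
  induction N with
  | zero => simpa using h1
  | succ N ih =>
    rw [pow_succ, Nat.succ_mul]
    exact hmul _ _ _ _ ih hx

lemma filt_prod {F : ℕ → Submodule 𝕜 A} (h1 : (1 : A) ∈ F 0)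
    (hmul : ∀ m m' x y, x ∈ F m → y ∈ F m' → x * y ∈ F (m + m')) {ι : Type*} (s : Finset ι)
    (m : ι → ℕ) (x : ι → A) (hx : ∀ i ∈ s, x i ∈ F (m i)) :
    ∏ i ∈ s, x i ∈ F (∑ i ∈ s, m i) := by
  classical
  induction s using Finset.induction_on with
  | empty => simpa using h1
  | insert i s hi ih =>
    rw [Finset.prod_insert hi, Finset.sum_insert hi]
    exact hmul _ _ _ _ (hx i (by simp)) (ih fun j hj => hx j (by simp [hj]))

lemma filt_aeval {F : ℕ → Submodule 𝕜 A} (h1 : (1 : A) ∈ F 0)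
    (hmul : ∀ m m' x y, x ∈ F m → y ∈ F m' → x * y ∈ F (m + m')) {σ : Type*} {m : ℕ} (x : σ → A)
    (hx : ∀ i, x i ∈ F m) (e : MvPolynomial σ 𝕜) (k : ℕ) (he : e.IsHomogeneous k) :
    MvPolynomial.aeval x e ∈ F (k * m) := by
  rw [MvPolynomial.aeval_def, MvPolynomial.eval₂_eq]
  refine Submodule.sum_mem _ fun s hs => ?_
  rw [← Algebra.smul_def]
  refine Submodule.smul_mem _ _ ?_
  have hk : k = ∑ i ∈ s.support, s i := by
    have := he (MvPolynomial.mem_support_iff.1 hs)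
    rw [← this, Finsupp.weight_apply, Finsupp.sum]
    simp
  rw [hk, Finset.sum_mul]
  exact filt_prod h1 hmul _ _ _ fun i _ => filt_pow h1 hmul (hx i) _

end FiltGeneral

section Jac

variable {𝕜 : Type*} [Field 𝕜]
open MvPolynomial

lemma pderiv_of_homog_zero (e : MvPolynomial (Fin 3) 𝕜) (he : e.IsHomogeneous 0) (i : Fin 3) :
    pderiv i e = 0 := by
  rw [← totalDegree_zero_iff_isHomogeneous, totalDegree_eq_zero_iff_eq_C] at he
  rw [he, pderiv_C]

lemma jac_homog (Ω e e' : MvPolynomial (Fin 3) 𝕜) (n k k' : ℕ) (hn : 3 ≤ n)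
    (hΩ : Ω.IsHomogeneous n) (he : e.IsHomogeneous k) (he' : e'.IsHomogeneous k') :
    (jacBracket Ω e e').IsHomogeneous (k + k' + (n - 3)) := by
  have hexp : jacBracket Ω e e' =
      pderiv 0 e * pderiv 1 e' * pderiv 2 Ω - pderiv 0 e * pderiv 2 e' * pderiv 1 Ω
      - pderiv 1 e * pderiv 0 e' * pderiv 2 Ω + pderiv 1 e * pderiv 2 e' * pderiv 0 Ω
      + pderiv 2 e * pderiv 0 e' * pderiv 1 Ω - pderiv 2 e * pderiv 1 e' * pderiv 0 Ω := by
    rw [jacBracket, Matrix.det_fin_three]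
    simp
  rcases Nat.eq_zero_or_pos k with rfl | hk
  · rw [hexp]; simp only [pderiv_of_homog_zero e he]
    simpa using isHomogeneous_zero _ _ _
  rcases Nat.eq_zero_or_pos k' with rfl | hk'
  · rw [hexp]; simp only [pderiv_of_homog_zero e' he']
    simpa using isHomogeneous_zero _ _ _
  have key : ∀ i j l : Fin 3, (pderiv i e * pderiv j e' * pderiv l Ω).IsHomogeneous
      (k + k' + (n - 3)) := by
    intro i j l
    have := ((he.pderiv (i := i)).mul (he'.pderiv (i := j))).mul (hΩ.pderiv (i := l))
    rwa [show k - 1 + (k' - 1) + (n - 1) = k + k' + (n - 3) by omega] at this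
  rw [hexp]
  exact (((((key _ _ _).sub (key _ _ _)).sub (key _ _ _)).add (key _ _ _)).add
    (key _ _ _)).sub (key _ _ _)

end Jac

section Filt

variable {𝕜 : Type*} [Field 𝕜] {d : ℕ} (Ω : Fin d → MvPolynomial (Fin 3) 𝕜) (ξ : Fin d → 𝕜)
  (a : Fin d → ℕ)

/-- pure homogeneous tensors of weight `c`. -/
def pureP (c : ℕ) : Set (⨂[𝕜] i, PQuot 𝕜 (Ω i) (ξ i)) :=
  {u | ∃ (e : Fin d → MvPolynomial (Fin 3) 𝕜) (k : Fin d → ℕ),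
    (∀ i, (e i).IsHomogeneous (k i)) ∧ ∑ i, a i * k i = c ∧
    u = PiTensorProduct.tprod 𝕜 fun i => mkA (Ω i) (ξ i) (e i)}

/-- The weight filtration on `P`. -/
noncomputable def FP (c : ℕ) : Submodule 𝕜 (⨂[𝕜] i, PQuot 𝕜 (Ω i) (ξ i)) :=
  Submodule.span 𝕜 {u | ∃ c' ≤ c, u ∈ pureP Ω ξ a c'}

variable {Ω ξ a}

lemma mem_FP {c c' : ℕ} (h : c' ≤ c) {u} (hu : u ∈ pureP Ω ξ a c') : u ∈ FP Ω ξ a c :=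
  Submodule.subset_span ⟨c', h, hu⟩

lemma FP_mono {c c' : ℕ} (h : c ≤ c') : FP Ω ξ a c ≤ FP Ω ξ a c' :=
  Submodule.span_mono fun _ ⟨c'', h', hu⟩ => ⟨c'', h'.trans h, hu⟩

lemma pureP_mul {c c' : ℕ} {u v} (hu : u ∈ pureP Ω ξ a c) (hv : v ∈ pureP Ω ξ a c') :
    u * v ∈ pureP Ω ξ a (c + c') := by
  obtain ⟨e, k, he, hk, rfl⟩ := hu
  obtain ⟨e', k', he', hk', rfl⟩ := hv
  refine ⟨e * e', k + k', fun i => (he i).mul (he' i), ?_, ?_⟩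
  · simp [mul_add, Finset.sum_add_distrib, hk, hk']
  · rw [PiTensorProduct.tprod_mul_tprod]
    congr 1

lemma pureP_one : (1 : ⨂[𝕜] i, PQuot 𝕜 (Ω i) (ξ i)) ∈ pureP Ω ξ a 0 := by
  refine ⟨1, 0, fun i => MvPolynomial.isHomogeneous_one _ _, by simp, ?_⟩
  rw [PiTensorProduct.one_def]
  congr 1

lemma FP_one : (1 : ⨂[𝕜] i, PQuot 𝕜 (Ω i) (ξ i)) ∈ FP Ω ξ a 0 := mem_FP le_rfl pureP_one

lemma FP_mul (m m' : ℕ) (x y) (hx : x ∈ FP Ω ξ a m) (hy : y ∈ FP Ω ξ a m') :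
    x * y ∈ FP Ω ξ a (m + m') := by
  have h : FP Ω ξ a m * FP Ω ξ a m' ≤ FP Ω ξ a (m + m') := by
    unfold FP
    rw [Submodule.span_mul_span, Submodule.span_le]
    rintro _ ⟨u, ⟨c, hc, hu⟩, v, ⟨c', hc', hv⟩, rfl⟩
    exact mem_FP (add_le_add hc hc') (pureP_mul hu hv)
  exact h (Submodule.mul_mem_mul hx hy)

lemma single_mem_pureP (i : Fin d) (e : MvPolynomial (Fin 3) 𝕜) (k : ℕ) (he : e.IsHomogeneous k) :
    PiTensorProduct.singleAlgHom (R := 𝕜) (A := fun i => PQuot 𝕜 (Ω i) (ξ i)) i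
      (mkA (Ω i) (ξ i) e) ∈ pureP Ω ξ a (a i * k) := by
  refine ⟨Function.update 1 i e, Function.update 0 i k, ?_, ?_, ?_⟩
  · intro j
    rcases eq_or_ne j i with rfl | h
    · simpa using he
    · simpa [h] using MvPolynomial.isHomogeneous_one _ _
  · rw [Finset.sum_eq_single i]
    · simp
    · intro j _ h; simp [h]
    · simp
  · rw [PiTensorProduct.singleAlgHom_apply]
    congr 1
    funext j
    rcases eq_or_ne j i with rfl | h
    · simp
    · simp [h]

lemma piTprod_eq_prod (v : ∀ i, PQuot 𝕜 (Ω i) (ξ i)) :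
    PiTensorProduct.tprod 𝕜 v = ∏ i, PiTensorProduct.singleAlgHom (R := 𝕜)
      (A := fun i => PQuot 𝕜 (Ω i) (ξ i)) i (v i) := by
  have h := map_prod (PiTensorProduct.tprodMonoidHom 𝕜 (A := fun i => PQuot 𝕜 (Ω i) (ξ i)))
    (fun i => Pi.mulSingle i (v i)) Finset.univ
  rw [Finset.univ_prod_mulSingle] at h
  simpa using h

lemma FP_exhaust (u : ⨂[𝕜] i, PQuot 𝕜 (Ω i) (ξ i)) : ∃ c, u ∈ FP Ω ξ a c := by
  let S : Subalgebra 𝕜 (⨂[𝕜] i, PQuot 𝕜 (Ω i) (ξ i)) :=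
    { carrier := {u | ∃ c, u ∈ FP Ω ξ a c}
      mul_mem' := fun {x y} ⟨c, hx⟩ ⟨c', hy⟩ => ⟨c + c', FP_mul _ _ _ _ hx hy⟩
      add_mem' := fun {x y} ⟨c, hx⟩ ⟨c', hy⟩ => ⟨c + c', Submodule.add_mem _
        (FP_mono (by omega) hx) (FP_mono (by omega) hy)⟩
      algebraMap_mem' := fun r => ⟨0, by
        rw [Algebra.algebraMap_eq_smul_one]; exact Submodule.smul_mem _ _ FP_one⟩ }
  have h1 : ∀ i (v : PQuot 𝕜 (Ω i) (ξ i)), PiTensorProduct.singleAlgHom (R := 𝕜)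
      (A := fun i => PQuot 𝕜 (Ω i) (ξ i)) i v ∈ S := by
    intro i v
    obtain ⟨e, rfl⟩ := mkA_surjective _ _ v
    induction e using MvPolynomial.induction_on with
    | C r =>
      rw [← MvPolynomial.algebraMap_eq, AlgHom.commutes, AlgHom.commutes]
      exact S.algebraMap_mem r
    | add p q hp hq => rw [map_add, map_add]; exact S.add_mem hp hq
    | mul_X p l hp =>
      rw [map_mul, map_mul]
      exact S.mul_mem hp ⟨_, mem_FP le_rfl (single_mem_pureP i _ 1 (MvPolynomial.isHomogeneous_X _ _))⟩
  suffices h : u ∈ S from h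
  induction u using PiTensorProduct.induction_on with
  | smul_tprod r v =>
    refine S.smul_mem ?_ r
    rw [piTprod_eq_prod]
    exact S.prod_mem fun i _ => h1 i _
  | add x y hx hy => exact S.add_mem hx hy

lemma FP_finite (ha : ∀ i, 0 < a i) (c : ℕ) : FiniteDimensional 𝕜 (FP Ω ξ a c) := by
  let V : ∀ i, Submodule 𝕜 (PQuot 𝕜 (Ω i) (ξ i)) := fun i =>
    (MvPolynomial.restrictTotalDegree (Fin 3) 𝕜 c).map (mkA (Ω i) (ξ i)).toLinearMap
  have hV : ∀ i, FiniteDimensional 𝕜 (V i) := fun i => by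
    have : FiniteDimensional 𝕜 (MvPolynomial.restrictTotalDegree (Fin 3) 𝕜 c) := by
      infer_instance
    infer_instance
  have hle : FP Ω ξ a c ≤ LinearMap.range (PiTensorProduct.map (fun i => (V i).subtype)) := by
    refine Submodule.span_le.2 ?_
    rintro _ ⟨c', hc', e, k, he, hk, rfl⟩
    refine ⟨PiTensorProduct.tprod 𝕜 fun i => ⟨mkA (Ω i) (ξ i) (e i), ⟨e i, ?_, rfl⟩⟩, ?_⟩
    · change e i ∈ MvPolynomial.restrictTotalDegree (Fin 3) 𝕜 c
      rw [MvPolynomial.mem_restrictTotalDegree]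
      refine (he i).totalDegree_le.trans ?_
      have h1 : a i * k i ≤ ∑ i, a i * k i :=
        Finset.single_le_sum (f := fun i => a i * k i) (fun _ _ => Nat.zero_le _) (Finset.mem_univ i)
      have h2 : k i ≤ a i * k i := Nat.le_mul_of_pos_left _ (ha i)
      omega
    · rw [PiTensorProduct.map_tprod]; rfl
  exact Submodule.finiteDimensional_of_le hle

lemma FP_bracket {n : Fin d → ℕ} (hhom : ∀ i, (Ω i).IsHomogeneous (n i)) (hn : ∀ i, 3 ≤ n i)
    (P : ∀ i, PoissonStructure 𝕜 (PQuot 𝕜 (Ω i) (ξ i)))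
    (hP : ∀ i, IsInducedBracket (Ω i) (ξ i) (P i))
    (PT : PoissonStructure 𝕜 (⨂[𝕜] i, PQuot 𝕜 (Ω i) (ξ i)))
    (hPT : IsPiTensorBracket P PT) {D : ℕ} (hD : ∀ i, a i * (n i - 3) ≤ D) {c c' : ℕ} {u v}
    (hu : u ∈ pureP Ω ξ a c) (hv : v ∈ pureP Ω ξ a c') :
    PT.bracket u v ∈ FP Ω ξ a (c + c' + D) := by
  obtain ⟨e, k, he, hk, rfl⟩ := hu
  obtain ⟨e', k', he', hk', rfl⟩ := hv
  rw [hPT]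
  refine Submodule.sum_mem _ fun i _ => ?_
  refine mem_FP (c' := c + c' + a i * (n i - 3)) (by have := hD i; omega) ?_
  refine ⟨Function.update (e * e') i (jacBracket (Ω i) (e i) (e' i)),
    Function.update (k + k') i (k i + k' i + (n i - 3)), ?_, ?_, ?_⟩
  · intro j
    rcases eq_or_ne j i with rfl | h
    · simpa using jac_homog _ _ _ _ _ _ (hn j) (hhom j) (he j) (he' j)
    · simpa [h] using (he j).mul (he' j)
  · have : ∀ j, a j * (Function.update (k + k') i (k i + k' i + (n i - 3)) j) =
        a j * k j + a j * k' j + if j = i then a i * (n i - 3) else 0 := by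
      intro j
      rcases eq_or_ne j i with rfl | h
      · simp; ring
      · simp [h]; ring
    simp only [this, Finset.sum_add_distrib, hk, hk']
    simp
  · congr 1
    funext j
    rcases eq_or_ne j i with rfl | h
    · simp only [Function.update_self]
      exact hP j _ _
    · simp [h]

end Filt

section FiltB

variable {𝕜 : Type*} [Field 𝕜] {d : ℕ} (Ω : Fin d → MvPolynomial (Fin 3) 𝕜) (ξ : Fin d → 𝕜)
  (a : Fin d → ℕ) {R : Type*} [CommRing R] [Algebra 𝕜 R] (ℛ : ℕ → Submodule 𝕜 R) (b : ℕ)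

/-- pure homogeneous tensors of `P ⊗ R` of weight `W`. -/
def pureB (W : ℕ) : Set ((⨂[𝕜] i, PQuot 𝕜 (Ω i) (ξ i)) ⊗[𝕜] R) :=
  {X | ∃ c j u r, u ∈ pureP Ω ξ a c ∧ r ∈ ℛ j ∧ c + b * j = W ∧ X = u ⊗ₜ[𝕜] r}

/-- The weight filtration on `P ⊗ R`. -/
noncomputable def FB (m : ℕ) : Submodule 𝕜 ((⨂[𝕜] i, PQuot 𝕜 (Ω i) (ξ i)) ⊗[𝕜] R) :=
  Submodule.span 𝕜 {X | ∃ W ≤ m, X ∈ pureB Ω ξ a ℛ b W}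

variable {Ω ξ a ℛ b}

lemma mem_FB {m W : ℕ} (h : W ≤ m) {X} (hX : X ∈ pureB Ω ξ a ℛ b W) : X ∈ FB Ω ξ a ℛ b m :=
  Submodule.subset_span ⟨W, h, hX⟩

lemma FB_mono {m m' : ℕ} (h : m ≤ m') : FB Ω ξ a ℛ b m ≤ FB Ω ξ a ℛ b m' :=
  Submodule.span_mono fun _ ⟨W, h', hu⟩ => ⟨W, h'.trans h, hu⟩

lemma pureB_mul (hRmul : ∀ i j : ℕ, ∀ x ∈ ℛ i, ∀ y ∈ ℛ j, x * y ∈ ℛ (i + j))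
    {W W' : ℕ} {X Y} (hX : X ∈ pureB Ω ξ a ℛ b W) (hY : Y ∈ pureB Ω ξ a ℛ b W') :
    X * Y ∈ pureB Ω ξ a ℛ b (W + W') := by
  obtain ⟨c, j, u, r, hu, hr, rfl, rfl⟩ := hX
  obtain ⟨c', j', u', r', hu', hr', rfl, rfl⟩ := hY
  exact ⟨c + c', j + j', u * u', r * r', pureP_mul hu hu', hRmul _ _ _ hr _ hr', by ring,
    Algebra.TensorProduct.tmul_mul_tmul _ _ _ _⟩

lemma FB_one (hR0 : ℛ 0 = Submodule.span 𝕜 {(1 : R)}) :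
    (1 : (⨂[𝕜] i, PQuot 𝕜 (Ω i) (ξ i)) ⊗[𝕜] R) ∈ FB Ω ξ a ℛ b 0 :=
  mem_FB le_rfl ⟨0, 0, 1, 1, pureP_one, by rw [hR0]; exact Submodule.mem_span_singleton_self _,
    rfl, rfl⟩

lemma FB_mul (hRmul : ∀ i j : ℕ, ∀ x ∈ ℛ i, ∀ y ∈ ℛ j, x * y ∈ ℛ (i + j))
    (m m' : ℕ) (x y) (hx : x ∈ FB Ω ξ a ℛ b m) (hy : y ∈ FB Ω ξ a ℛ b m') :
    x * y ∈ FB Ω ξ a ℛ b (m + m') := by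
  have h : FB Ω ξ a ℛ b m * FB Ω ξ a ℛ b m' ≤ FB Ω ξ a ℛ b (m + m') := by
    unfold FB
    rw [Submodule.span_mul_span, Submodule.span_le]
    rintro _ ⟨u, ⟨c, hc, hu⟩, v, ⟨c', hc', hv⟩, rfl⟩
    exact mem_FB (add_le_add hc hc') (pureB_mul hRmul hu hv)
  exact h (Submodule.mul_mem_mul hx hy)

lemma FB_tmul {c l : ℕ} {u} {r : R} (hu : u ∈ FP Ω ξ a c) (hr : r ∈ RF ℛ l) :
    u ⊗ₜ[𝕜] r ∈ FB Ω ξ a ℛ b (c + b * l) := by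
  induction hu using Submodule.span_induction with
  | mem u hu =>
    obtain ⟨c', hc', hu⟩ := hu
    induction hr using Submodule.span_induction with
    | mem r hr =>
      obtain ⟨j, hj, hr⟩ := hr
      exact mem_FB (add_le_add hc' (Nat.mul_le_mul_left b hj)) ⟨c', j, u, r, hu, hr, rfl, rfl⟩
    | zero => rw [TensorProduct.tmul_zero]; exact Submodule.zero_mem _
    | add x y _ _ hx hy => rw [TensorProduct.tmul_add]; exact Submodule.add_mem _ hx hy
    | smul s x _ hx => rw [TensorProduct.tmul_smul]; exact Submodule.smul_mem _ s hx
  | zero => rw [TensorProduct.zero_tmul]; exact Submodule.zero_mem _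
  | add x y _ _ hx hy => rw [TensorProduct.add_tmul]; exact Submodule.add_mem _ hx hy
  | smul s x _ hx => rw [← TensorProduct.smul_tmul']; exact Submodule.smul_mem _ s hx

lemma RF_exhaust (hdecomp : DirectSum.IsInternal ℛ) (r : R) : ∃ l, r ∈ RF ℛ l := by
  have hr : r ∈ ⨆ j, ℛ j := by rw [hdecomp.submodule_iSup_eq_top]; trivial
  induction hr using Submodule.iSup_induction' with
  | mem j x hx => exact ⟨j, mem_RF le_rfl hx⟩
  | zero => exact ⟨0, Submodule.zero_mem _⟩
  | add x y _ _ hx hy =>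
    obtain ⟨l, hl⟩ := hx
    obtain ⟨l', hl'⟩ := hy
    have hm : ∀ {p q : ℕ}, p ≤ q → RF ℛ p ≤ RF ℛ q := fun h =>
      Submodule.span_mono fun _ ⟨j, hj, hu⟩ => ⟨j, hj.trans h, hu⟩
    exact ⟨l + l', Submodule.add_mem _ (hm (by omega) hl) (hm (by omega) hl')⟩

lemma FB_exhaust (hdecomp : DirectSum.IsInternal ℛ)
    (X : (⨂[𝕜] i, PQuot 𝕜 (Ω i) (ξ i)) ⊗[𝕜] R) : ∃ m, X ∈ FB Ω ξ a ℛ b m := by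
  induction X using TensorProduct.induction_on with
  | zero => exact ⟨0, Submodule.zero_mem _⟩
  | tmul u r =>
    obtain ⟨c, hc⟩ := FP_exhaust (a := a) u
    obtain ⟨l, hl⟩ := RF_exhaust hdecomp r
    exact ⟨_, FB_tmul hc hl⟩
  | add x y hx hy =>
    obtain ⟨l, hl⟩ := hx
    obtain ⟨l', hl'⟩ := hy
    exact ⟨l + l', Submodule.add_mem _ (FB_mono (by omega) hl) (FB_mono (by omega) hl')⟩

lemma FB_small (hR0 : ℛ 0 = Submodule.span 𝕜 {(1 : R)}) {m : ℕ} (hm : m < b)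
    {X} (hX : X ∈ FB Ω ξ a ℛ b m) : ∃ u ∈ FP Ω ξ a m, X = u ⊗ₜ[𝕜] (1 : R) := by
  induction hX using Submodule.span_induction with
  | mem x hx =>
    obtain ⟨W, hW, c, j, u, r, hu, hr, hc, rfl⟩ := hx
    have hj : j = 0 := by
      rcases Nat.eq_zero_or_pos j with h | h
      · exact h
      · have := Nat.le_mul_of_pos_right b h
        omega
    subst hj
    rw [hR0, Submodule.mem_span_singleton] at hr
    obtain ⟨s, rfl⟩ := hr
    exact ⟨s • u, Submodule.smul_mem _ _ (mem_FP (by omega) hu), by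
      rw [TensorProduct.smul_tmul]⟩
  | zero => exact ⟨0, Submodule.zero_mem _, by rw [TensorProduct.zero_tmul]⟩
  | add x y _ _ hx hy =>
    obtain ⟨u, hu, rfl⟩ := hx
    obtain ⟨v, hv, rfl⟩ := hy
    exact ⟨u + v, Submodule.add_mem _ hu hv, by rw [TensorProduct.add_tmul]⟩
  | smul s x _ hx =>
    obtain ⟨u, hu, rfl⟩ := hx
    exact ⟨s • u, Submodule.smul_mem _ _ hu, by rw [TensorProduct.smul_tmul']⟩

lemma FB_bracket {n : Fin d → ℕ} (hhom : ∀ i, (Ω i).IsHomogeneous (n i)) (hn : ∀ i, 3 ≤ n i)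
    (P : ∀ i, PoissonStructure 𝕜 (PQuot 𝕜 (Ω i) (ξ i)))
    (hP : ∀ i, IsInducedBracket (Ω i) (ξ i) (P i))
    (PT : PoissonStructure 𝕜 (⨂[𝕜] i, PQuot 𝕜 (Ω i) (ξ i)))
    (hPT : IsPiTensorBracket P PT) {D : ℕ} (hD : ∀ i, a i * (n i - 3) ≤ D)
    (PR : PoissonStructure 𝕜 R)
    (hdecomp : DirectSum.IsInternal ℛ)
    (hR0 : ℛ 0 = Submodule.span 𝕜 {(1 : R)})
    (hRmul : ∀ i j : ℕ, ∀ x ∈ ℛ i, ∀ y ∈ ℛ j, x * y ∈ ℛ (i + j))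
    (hRgen : Algebra.adjoin 𝕜 (ℛ 1 : Set R) = ⊤)
    (w : ℤ) (w0 : ℕ) (hw0 : w ≤ w0) (hbD : b * w0 ≤ D)
    (hRbr : ∀ x ∈ ℛ 1, ∀ y ∈ ℛ 1,
      PR.bracket x y ∈ (if 0 ≤ w + 2 then ℛ (w + 2).toNat else ⊥))
    (PT2 : PoissonStructure 𝕜 ((⨂[𝕜] i, PQuot 𝕜 (Ω i) (ξ i)) ⊗[𝕜] R))
    (hPT2 : IsTensorBracket PT PR PT2) {m m' : ℕ} {X Y}
    (hX : X ∈ FB Ω ξ a ℛ b m) (hY : Y ∈ FB Ω ξ a ℛ b m') :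
    PT2.bracket X Y ∈ FB Ω ξ a ℛ b (m + m' + D) := by
  refine PT2.bracket_mem_of_span ?_ hX hY
  rintro _ ⟨W, hW, c, j, u, r, hu, hr, hc, rfl⟩ _ ⟨W', hW', c', j', u', r', hu', hr', hc', rfl⟩
  rw [hPT2]
  refine Submodule.add_mem _ ?_ ?_
  · have h1 := FP_bracket hhom hn P hP PT hPT hD hu hu'
    have h2 := mem_RF le_rfl (hRmul _ _ _ hr _ hr')
    refine FB_mono ?_ (FB_tmul h1 h2)
    rw [mul_add]; omega
  · have h1 := mem_FP le_rfl (pureP_mul hu hu')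
    have h2 := R_bracket PR hdecomp hR0 hRmul hRgen w w0 hw0 hRbr j j' r r' hr hr'
    refine FB_mono ?_ (FB_tmul h1 h2)
    rw [mul_add, mul_add]; omega

end FiltB

section Symbol

variable {𝕜 : Type*} [Field 𝕜] {d : ℕ} {Ω : Fin d → MvPolynomial (Fin 3) 𝕜} {ξ : Fin d → 𝕜}
  {a : Fin d → ℕ} {R : Type*} [CommRing R] [Algebra 𝕜 R] {ℛ : ℕ → Submodule 𝕜 R} {b : ℕ}

lemma prod_deg_coeff {ι S : Type*} [CommRing S] (s : Finset ι) (q : ι → Polynomial S) (k : ι → ℕ)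
    (h : ∀ i ∈ s, (q i).natDegree ≤ k i) : (∏ i ∈ s, q i).natDegree ≤ ∑ i ∈ s, k i ∧
      (∏ i ∈ s, q i).coeff (∑ i ∈ s, k i) = ∏ i ∈ s, (q i).coeff (k i) := by
  classical
  induction s using Finset.induction_on with
  | empty => simp
  | insert i s hi ih =>
    have h1 := h i (by simp)
    obtain ⟨h2, h3⟩ := ih fun j hj => h j (by simp [hj])
    rw [Finset.prod_insert hi, Finset.sum_insert hi, Finset.prod_insert hi]
    exact ⟨Polynomial.natDegree_mul_le.trans (add_le_add h1 h2), by
      rw [Polynomial.coeff_mul_add_eq_of_natDegree_le h1 h2, h3]⟩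

/-- `S` computes the leading symbol along `p`. -/
def IsSymbol (Ω : Fin d → MvPolynomial (Fin 3) 𝕜) (ξ : Fin d → 𝕜) (a : Fin d → ℕ)
    (ℛ : ℕ → Submodule 𝕜 R) (b : ℕ) (p : Fin d → Fin 3 → 𝕜)
    (S : ((⨂[𝕜] i, PQuot 𝕜 (Ω i) (ξ i)) ⊗[𝕜] R) →ₗ[𝕜] Polynomial R) : Prop :=
  ∀ (e : Fin d → MvPolynomial (Fin 3) 𝕜) (k : Fin d → ℕ) (r : R) (j : ℕ),
    (∀ i, (e i).IsHomogeneous (k i)) → r ∈ ℛ j →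
    (S ((PiTensorProduct.tprod 𝕜 fun i => mkA (Ω i) (ξ i) (e i)) ⊗ₜ[𝕜] r)).natDegree ≤
      ∑ i, a i * k i + b * j ∧
    (S ((PiTensorProduct.tprod 𝕜 fun i => mkA (Ω i) (ξ i) (e i)) ⊗ₜ[𝕜] r)).coeff
      (∑ i, a i * k i + b * j) = (∏ i, MvPolynomial.eval (p i) (e i)) • r

lemma exists_symbol {n : Fin d → ℕ} (hhom : ∀ i, (Ω i).IsHomogeneous (n i))
    (h0 : ∀ i, Ω i ≠ 0) (hn : ∀ i, 0 < n i) (ha : ∀ i, 0 < a i)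
    (hdecomp : DirectSum.IsInternal ℛ) (p : Fin d → Fin 3 → 𝕜)
    (hp : ∀ i, MvPolynomial.eval (p i) (Ω i) = 0) :
    ∃ S, IsSymbol Ω ξ a ℛ b p S := by
  choose dl hdl using fun i => exists_dl (Ω i) (n i) (hhom i) (h0 i) (hn i) (ξ i) (a i) (ha i)
    (p i) (hp i)
  obtain ⟨δ, hδ⟩ := exists_glue ℛ hdecomp
    (fun j => (Polynomial.monomial (R := R) (b * j)).restrictScalars 𝕜)
  refine ⟨LinearMap.mul' 𝕜 (Polynomial R) ∘ₗ TensorProduct.map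
    ((Polynomial.mapAlgHom (Algebra.ofId 𝕜 R)).toLinearMap ∘ₗ prodMap dl) δ, ?_⟩
  intro e k r j he hr
  have h1 := prod_deg_coeff Finset.univ (fun i => dl i (mkA (Ω i) (ξ i) (e i)))
    (fun i => a i * k i) (fun i _ => (hdl i _ _ (he i)).1)
  have hval : (LinearMap.mul' 𝕜 (Polynomial R) ∘ₗ TensorProduct.map
    ((Polynomial.mapAlgHom (Algebra.ofId 𝕜 R)).toLinearMap ∘ₗ prodMap dl) δ)
    ((PiTensorProduct.tprod 𝕜 fun i => mkA (Ω i) (ξ i) (e i)) ⊗ₜ[𝕜] r) =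
    (∏ i, dl i (mkA (Ω i) (ξ i) (e i))).map (algebraMap 𝕜 R) * Polynomial.monomial (b * j) r := by
    rw [LinearMap.comp_apply, TensorProduct.map_tmul, LinearMap.mul'_apply, LinearMap.comp_apply,
      prodMap_tprod, hδ j r hr]
    rfl
  rw [hval]
  have h2 := (Polynomial.natDegree_map_le (f := algebraMap 𝕜 R)).trans h1.1
  have h3 := Polynomial.natDegree_monomial_le r (m := b * j)
  refine ⟨Polynomial.natDegree_mul_le.trans (add_le_add h2 h3), ?_⟩
  rw [Polynomial.coeff_mul_add_eq_of_natDegree_le h2 h3, Polynomial.coeff_map, h1.2,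
    Polynomial.coeff_monomial, if_pos rfl, ← Algebra.smul_def]
  congr 1
  exact Finset.prod_congr rfl fun i _ => (hdl i _ _ (he i)).2

lemma symbol_deg {p S} (hS : IsSymbol Ω ξ a ℛ b p S) {m : ℕ} {X} (hX : X ∈ FB Ω ξ a ℛ b m) :
    (S X).natDegree ≤ m := by
  induction hX using Submodule.span_induction with
  | mem x hx =>
    obtain ⟨W, hW, c, j, u, r, ⟨e, k, he, hk, rfl⟩, hr, hc, rfl⟩ := hx
    have := (hS e k r j he hr).1
    omega
  | zero => simp
  | add x y _ _ hx hy => rw [map_add]; exact Polynomial.natDegree_add_le_of_degree_le hx hy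
  | smul c x _ hx => rw [map_smul]; exact (Polynomial.natDegree_smul_le _ _).trans hx

lemma symbol_coeff_zero {p S} (hS : IsSymbol Ω ξ a ℛ b p S) {m l : ℕ} (hml : m < l) {X}
    (hX : X ∈ FB Ω ξ a ℛ b m) : (S X).coeff l = 0 :=
  Polynomial.coeff_eq_zero_of_natDegree_lt (lt_of_le_of_lt (symbol_deg hS hX) hml)

lemma symbol_mul (hRmul : ∀ i j : ℕ, ∀ x ∈ ℛ i, ∀ y ∈ ℛ j, x * y ∈ ℛ (i + j))
    {p S} (hS : IsSymbol Ω ξ a ℛ b p S) {m m' : ℕ} {X Y} (hX : X ∈ FB Ω ξ a ℛ b m)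
    (hY : Y ∈ FB Ω ξ a ℛ b m') :
    (S (X * Y)).coeff (m + m') = (S X).coeff m * (S Y).coeff m' := by
  induction hX using Submodule.span_induction with
  | mem X hX =>
    induction hY using Submodule.span_induction with
    | mem Y hY =>
      obtain ⟨W, hW, hX⟩ := hX
      obtain ⟨W', hW', hY⟩ := hY
      have hXY := mem_FB le_rfl (pureB_mul hRmul hX hY)
      rcases hW.lt_or_eq with h | rfl
      · rw [symbol_coeff_zero hS (by omega) hXY, symbol_coeff_zero hS h (mem_FB le_rfl hX), zero_mul]
      rcases hW'.lt_or_eq with h | rfl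
      · rw [symbol_coeff_zero hS (by omega) hXY, symbol_coeff_zero hS h (mem_FB le_rfl hY), mul_zero]
      obtain ⟨c, j, u, r, ⟨e, k, he, hk, rfl⟩, hr, hc, rfl⟩ := hX
      obtain ⟨c', j', u', r', ⟨e', k', he', hk', rfl⟩, hr', hc', rfl⟩ := hY
      have h1 := (hS e k r j he hr).2
      have h2 := (hS e' k' r' j' he' hr').2
      have h3 := (hS (e * e') (k + k') (r * r') (j + j') (fun i => (he i).mul (he' i))
        (hRmul _ _ _ hr _ hr')).2
      rw [hk, hc] at h1
      rw [hk', hc'] at h2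
      have h4 : ∑ i, a i * (k + k') i + b * (j + j') = W + W' := by
        rw [← hc, ← hc', ← hk, ← hk']
        simp only [Pi.add_apply, mul_add, Finset.sum_add_distrib]
        ring
      rw [h4] at h3
      rw [h1, h2, Algebra.TensorProduct.tmul_mul_tmul, PiTensorProduct.tprod_mul_tprod]
      have h5 : ((fun i => mkA (Ω i) (ξ i) (e i)) * fun i => mkA (Ω i) (ξ i) (e' i)) =
        fun i => mkA (Ω i) (ξ i) ((e * e') i) := by
        funext i; simp
      rw [h5, h3, smul_mul_smul_comm, ← Finset.prod_mul_distrib]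
      simp
    | zero => simp
    | add x y _ _ hx hy =>
      rw [mul_add, map_add, map_add, Polynomial.coeff_add, Polynomial.coeff_add, hx, hy, mul_add]
    | smul c x _ hx =>
      rw [mul_smul_comm, map_smul, map_smul, Polynomial.coeff_smul, Polynomial.coeff_smul, hx,
        mul_smul_comm]
  | zero => simp
  | add x y _ _ hx hy =>
    rw [add_mul, map_add, map_add, Polynomial.coeff_add, Polynomial.coeff_add, hx, hy, add_mul]
  | smul c x _ hx =>
    rw [smul_mul_assoc, map_smul, map_smul, Polynomial.coeff_smul, Polynomial.coeff_smul, hx,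
      smul_mul_assoc]

lemma symbol_pow (hR0 : ℛ 0 = Submodule.span 𝕜 {(1 : R)})
    (hRmul : ∀ i j : ℕ, ∀ x ∈ ℛ i, ∀ y ∈ ℛ j, x * y ∈ ℛ (i + j))
    {p S} (hS : IsSymbol Ω ξ a ℛ b p S) {m : ℕ} {X} (hX : X ∈ FB Ω ξ a ℛ b m) (N : ℕ) :
    (S (X ^ (N + 1))).coeff ((N + 1) * m) = (S X).coeff m ^ (N + 1) := by
  induction N with
  | zero => simp
  | succ N ih =>
    rw [pow_succ, Nat.succ_mul, symbol_mul hRmul hS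
      (filt_pow (FB_one hR0) (FB_mul hRmul) hX (N + 1)) hX, ih, ← pow_succ]

end Symbol

section Leading

variable {𝕜 : Type*} [Field 𝕜] {d : ℕ} {Ω : Fin d → MvPolynomial (Fin 3) 𝕜} {ξ : Fin d → 𝕜}
  {a : Fin d → ℕ} {R : Type*} [CommRing R] [Algebra 𝕜 R] {ℛ : ℕ → Submodule 𝕜 R} {b : ℕ}

lemma kappa_pure (ha : ∀ i, 0 < a i) (κ : ∀ i, PQuot 𝕜 (Ω i) 0 →ₗ[𝕜] PQuot 𝕜 (Ω i) (ξ i))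
    (hκ : ∀ i c e, e.IsHomogeneous c →
      ∃ e' c', κ i (mkA (Ω i) 0 e) = mkA (Ω i) (ξ i) e + mkA (Ω i) (ξ i) e' ∧
        e'.IsHomogeneous c' ∧ (c' < c ∨ e' = 0))
    (e : Fin d → MvPolynomial (Fin 3) 𝕜) (k : Fin d → ℕ) (he : ∀ i, (e i).IsHomogeneous (k i))
    (j m : ℕ) (r : R) (hr : r ∈ ℛ j) (hm : ∑ i, a i * k i + b * j = m + 1) :
    (PiTensorProduct.tprod 𝕜 fun i => mkA (Ω i) (ξ i) (e i)) ⊗ₜ[𝕜] r -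
      (PiTensorProduct.tprod 𝕜 fun i => κ i (mkA (Ω i) 0 (e i))) ⊗ₜ[𝕜] r ∈ FB Ω ξ a ℛ b m := by
  classical
  choose e' k' h1 h2 h3 using fun i => hκ i (k i) (e i) (he i)
  have hfun : (fun i => κ i (mkA (Ω i) 0 (e i))) =
      (fun i => mkA (Ω i) (ξ i) (e i)) + fun i => mkA (Ω i) (ξ i) (e' i) := by
    funext i; exact h1 i
  rw [hfun, MultilinearMap.map_add_univ, ← Finset.add_sum_erase _ _ (Finset.mem_univ Finset.univ),
    Finset.piecewise_univ, TensorProduct.add_tmul, sub_add_cancel_left, TensorProduct.sum_tmul]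
  refine Submodule.neg_mem _ (Submodule.sum_mem _ fun s hs => ?_)
  have hs' : s ≠ Finset.univ := (Finset.mem_erase.1 hs).1
  obtain ⟨i0, hi0⟩ : ∃ i, i ∉ s := by
    by_contra hcon
    push Not at hcon
    exact hs' (Finset.eq_univ_iff_forall.2 hcon)
  by_cases hz : ∃ i, i ∉ s ∧ e' i = 0
  · obtain ⟨i, hi, hi'⟩ := hz
    rw [MultilinearMap.map_coord_zero _ i (by simp [hi, hi']), TensorProduct.zero_tmul]
    exact Submodule.zero_mem _
  · push Not at hz
    have hlt : ∀ i, i ∉ s → k' i < k i := fun i hi => (h3 i).resolve_right (hz i hi)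
    have hsum : ∑ i, a i * (s.piecewise k k') i < ∑ i, a i * k i := by
      refine Finset.sum_lt_sum (fun i _ => ?_) ⟨i0, Finset.mem_univ _, ?_⟩
      · by_cases hi : i ∈ s
        · simp [hi]
        · simp only [hi, not_false_eq_true, Finset.piecewise_eq_of_notMem]
          exact Nat.mul_le_mul_left _ (hlt i hi).le
      · simp only [hi0, not_false_eq_true, Finset.piecewise_eq_of_notMem]
        exact Nat.mul_lt_mul_of_pos_left (hlt i0 hi0) (ha i0)
    refine mem_FB (W := ∑ i, a i * (s.piecewise k k') i + b * j) (by omega)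
      ⟨_, j, _, r, ⟨s.piecewise e e', s.piecewise k k', ?_, rfl, ?_⟩, hr, rfl, rfl⟩
    · intro i
      by_cases hi : i ∈ s
      · simpa [hi] using he i
      · simpa [hi] using h2 i
    · congr 1
      funext i
      by_cases hi : i ∈ s <;> simp [hi]

lemma exists_leading {n : Fin d → ℕ} (hhom : ∀ i, (Ω i).IsHomogeneous (n i))
    (h0 : ∀ i, Ω i ≠ 0) (hn : ∀ i, 0 < n i) (ha : ∀ i, 0 < a i) :
    ∃ K : ((⨂[𝕜] i, PQuot 𝕜 (Ω i) 0) ⊗[𝕜] R) →ₗ[𝕜] ((⨂[𝕜] i, PQuot 𝕜 (Ω i) (ξ i)) ⊗[𝕜] R),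
    ∀ m, ∀ X ∈ FB Ω ξ a ℛ b (m + 1), ∃ z, X - K z ∈ FB Ω ξ a ℛ b m ∧
      ∀ p S, IsSymbol Ω ξ a ℛ b p S → ∀ L : ∀ i, PQuot 𝕜 (Ω i) 0 →ₗ[𝕜] 𝕜,
        (∀ i e, L i (mkA (Ω i) 0 e) = MvPolynomial.eval (p i) e) →
        evR (prodMap L) z = (S X).coeff (m + 1) := by
  choose κ hκ using fun i => exists_kappa (Ω i) (n i) (hhom i) (h0 i) (hn i) (ξ i)
  refine ⟨TensorProduct.map (PiTensorProduct.map κ) LinearMap.id, ?_⟩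
  intro m X hX
  induction hX using Submodule.span_induction with
  | mem X hX =>
    obtain ⟨W, hW, hX⟩ := hX
    rcases hW.lt_or_eq with h | rfl
    · refine ⟨0, ?_, ?_⟩
      · rw [map_zero, sub_zero]
        exact mem_FB (by omega) hX
      · intro p S hS L hL
        rw [map_zero, symbol_coeff_zero hS h (mem_FB le_rfl hX)]
    · obtain ⟨c, j, u, r, ⟨e, k, he, hk, rfl⟩, hr, hc, rfl⟩ := hX
      refine ⟨(PiTensorProduct.tprod 𝕜 fun i => mkA (Ω i) 0 (e i)) ⊗ₜ[𝕜] r, ?_, ?_⟩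
      · rw [TensorProduct.map_tmul, PiTensorProduct.map_tprod]
        exact kappa_pure ha κ hκ e k he j m r hr (by rw [hk, hc])
      · intro p S hS L hL
        have h1 := (hS e k r j he hr).2
        rw [hk, hc] at h1
        rw [h1, evR_tmul, prodMap_tprod]
        simp only [hL]
  | zero => exact ⟨0, by simp, by simp⟩
  | add x y _ _ hx hy =>
    obtain ⟨z, h1, h2⟩ := hx
    obtain ⟨z', h1', h2'⟩ := hy
    refine ⟨z + z', ?_, ?_⟩
    · rw [map_add, add_sub_add_comm]; exact Submodule.add_mem _ h1 h1'
    · intro p S hS L hL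
      rw [map_add, map_add, Polynomial.coeff_add, h2 p S hS L hL, h2' p S hS L hL]
  | smul c x _ hx =>
    obtain ⟨z, h1, h2⟩ := hx
    refine ⟨c • z, ?_, ?_⟩
    · rw [map_smul, ← smul_sub]; exact Submodule.smul_mem _ _ h1
    · intro p S hS L hL
      rw [map_smul, map_smul, Polynomial.coeff_smul, h2 p S hS L hL]

lemma power_drop [IsAlgClosed 𝕜] [CharZero 𝕜] [IsDomain R] {n : Fin d → ℕ}
    (hhom : ∀ i, (Ω i).IsHomogeneous (n i))
    (hiso : ∀ i, HasIsolatedSingularity (Ω i)) (hn : ∀ i, 5 ≤ n i) (h0 : ∀ i, Ω i ≠ 0)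
    (ha : ∀ i, 0 < a i)
    (hdecomp : DirectSum.IsInternal ℛ) (hR0 : ℛ 0 = Submodule.span 𝕜 {(1 : R)})
    (hRmul : ∀ i j : ℕ, ∀ x ∈ ℛ i, ∀ y ∈ ℛ j, x * y ∈ ℛ (i + j))
    {m N M : ℕ} {X} (hX : X ∈ FB Ω ξ a ℛ b (m + 1)) (hXN : X ^ (N + 1) ∈ FB Ω ξ a ℛ b M)
    (hM : M < (N + 1) * (m + 1)) : X ∈ FB Ω ξ a ℛ b m := by
  have hn' : ∀ i, 0 < n i := fun i => by have := hn i; omega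
  obtain ⟨K, hK⟩ := exists_leading (ξ := ξ) (ℛ := ℛ) (b := b) hhom h0 hn' ha
  obtain ⟨z, hz1, hz2⟩ := hK m X hX
  have hz : z = 0 := by
    refine eq_zero_of_separating_tensor (fun i => {L | ∃ p : Fin 3 → 𝕜,
      MvPolynomial.eval p (Ω i) = 0 ∧ ∀ e, L (mkA (Ω i) 0 e) = MvPolynomial.eval p e}) ?_ z ?_
    · intro i v hv
      obtain ⟨e, rfl⟩ := mkA_surjective _ _ v
      have hdvd : Ω i ∣ e := by
        refine dvd_of_vanish (Ω i) (n i) (hhom i) (hiso i) e ?_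
        intro p hp
        obtain ⟨L, hL⟩ := exists_liftQuot (Ω i) 0 (MvPolynomial.aeval (R := 𝕜) p).toLinearMap (by
          intro h
          simp [MvPolynomial.aeval_eq_eval, hp])
        have hL' : ∀ e, L (mkA (Ω i) 0 e) = MvPolynomial.eval p e := by
          intro e; rw [hL]; simp [MvPolynomial.aeval_eq_eval]
        rw [← hL']
        exact hv L ⟨p, hp, hL'⟩
      obtain ⟨h, rfl⟩ := hdvd
      rw [mkA_eq_zero_iff]
      exact ⟨h, by simp⟩
    · intro φ hφ
      choose p hp1 hp2 using hφ
      obtain ⟨S, hS⟩ := exists_symbol (ξ := ξ) (b := b) hhom h0 hn' ha hdecomp p hp1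
      rw [hz2 p S hS φ hp2]
      have h1 := symbol_pow hR0 hRmul hS hX N
      rw [symbol_coeff_zero hS hM hXN] at h1
      exact pow_eq_zero_iff (Nat.succ_ne_zero N) |>.1 h1.symm
  rw [hz, map_zero, sub_zero] at hz1
  exact hz1

end Leading

section Main

variable {𝕜 : Type*} [Field 𝕜] {d : ℕ} {Ω : Fin d → MvPolynomial (Fin 3) 𝕜} {ξ : Fin d → 𝕜}
  {a : Fin d → ℕ} {R : Type*} [CommRing R] [Algebra 𝕜 R] {ℛ : ℕ → Submodule 𝕜 R} {b : ℕ}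

lemma single_bracket (P : ∀ i, PoissonStructure 𝕜 (PQuot 𝕜 (Ω i) (ξ i)))
    (PT : PoissonStructure 𝕜 (⨂[𝕜] i, PQuot 𝕜 (Ω i) (ξ i)))
    (hPT : IsPiTensorBracket P PT) (i : Fin d) (u v : PQuot 𝕜 (Ω i) (ξ i)) :
    PT.bracket (PiTensorProduct.singleAlgHom (R := 𝕜) (A := fun i => PQuot 𝕜 (Ω i) (ξ i)) i u)
      (PiTensorProduct.singleAlgHom (R := 𝕜) (A := fun i => PQuot 𝕜 (Ω i) (ξ i)) i v) =
    PiTensorProduct.singleAlgHom (R := 𝕜) (A := fun i => PQuot 𝕜 (Ω i) (ξ i)) i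
      ((P i).bracket u v) := by
  simp only [PiTensorProduct.singleAlgHom_apply]
  rw [hPT, Finset.sum_eq_single i]
  · congr 1
    funext j
    rcases eq_or_ne j i with rfl | h
    · simp
    · simp [h]
  · intro j _ hj
    refine MultilinearMap.map_coord_zero _ j ?_
    simp only [Function.update_self, MonoidHom.mulSingle_apply, Pi.mulSingle_eq_of_ne hj]
    exact (P j).bracket_one_left 1
  · simp

lemma exists_jac (Ω : MvPolynomial (Fin 3) 𝕜) (l : Fin 3) : ∃ l1 l2 : Fin 3,
    jacBracket Ω (MvPolynomial.X l1) (MvPolynomial.X l2) = MvPolynomial.pderiv l Ω := by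
  have h : ∀ s t : Fin 3, MvPolynomial.pderiv s (MvPolynomial.X t : MvPolynomial (Fin 3) 𝕜) =
      if s = t then 1 else 0 := by
    intro s t
    rw [MvPolynomial.pderiv_X, Pi.single_apply]
    simp [eq_comm]
  refine ⟨l + 1, l + 2, ?_⟩
  rw [jacBracket, Matrix.det_fin_three]
  fin_cases l <;> simp [h]

lemma descent_step [IsAlgClosed 𝕜] [CharZero 𝕜] [IsDomain R] {n : Fin d → ℕ}
    (hhom : ∀ i, (Ω i).IsHomogeneous (n i))
    (hiso : ∀ i, HasIsolatedSingularity (Ω i)) (hn : ∀ i, 5 ≤ n i)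
    (ha : ∀ i, 0 < a i)
    (P : ∀ i, PoissonStructure 𝕜 (PQuot 𝕜 (Ω i) (ξ i)))
    (hP : ∀ i, IsInducedBracket (Ω i) (ξ i) (P i))
    (PT : PoissonStructure 𝕜 (⨂[𝕜] i, PQuot 𝕜 (Ω i) (ξ i)))
    (hPT : IsPiTensorBracket P PT) {D : ℕ} (hD : ∀ i, a i * (n i - 3) = D)
    (hdecomp : DirectSum.IsInternal ℛ)
    (hR0 : ℛ 0 = Submodule.span 𝕜 {(1 : R)})
    (hRmul : ∀ i j : ℕ, ∀ x ∈ ℛ i, ∀ y ∈ ℛ j, x * y ∈ ℛ (i + j))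
    (PT2 : PoissonStructure 𝕜 ((⨂[𝕜] i, PQuot 𝕜 (Ω i) (ξ i)) ⊗[𝕜] R))
    (hbr : ∀ m m' X Y, X ∈ FB Ω ξ a ℛ b m → Y ∈ FB Ω ξ a ℛ b m' →
      PT2.bracket X Y ∈ FB Ω ξ a ℛ b (m + m' + D))
    (f : (⨂[𝕜] i, PQuot 𝕜 (Ω i) (ξ i)) →ₐ[𝕜] (⨂[𝕜] i, PQuot 𝕜 (Ω i) (ξ i)) ⊗[𝕜] R)
    (hf : IsPoissonHom PT PT2 f) (i : Fin d) (m : ℕ) (hm : a i < m + 1)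
    (hY : ∀ l : Fin 3, f (PiTensorProduct.singleAlgHom (R := 𝕜)
      (A := fun i => PQuot 𝕜 (Ω i) (ξ i)) i (mkA (Ω i) (ξ i) (MvPolynomial.X l))) ∈
        FB Ω ξ a ℛ b (m + 1)) (l : Fin 3) :
    f (PiTensorProduct.singleAlgHom (R := 𝕜)
      (A := fun i => PQuot 𝕜 (Ω i) (ξ i)) i (mkA (Ω i) (ξ i) (MvPolynomial.X l))) ∈
        FB Ω ξ a ℛ b m := by
  let g : MvPolynomial (Fin 3) 𝕜 →ₐ[𝕜] (⨂[𝕜] i, PQuot 𝕜 (Ω i) (ξ i)) ⊗[𝕜] R :=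
    (f.comp (PiTensorProduct.singleAlgHom (R := 𝕜) (A := fun i => PQuot 𝕜 (Ω i) (ξ i)) i)).comp
      (mkA (Ω i) (ξ i))
  have hg : ∀ e, g e = MvPolynomial.aeval (fun l => g (MvPolynomial.X l)) e := fun e =>
    DFunLike.congr_fun (MvPolynomial.aeval_unique g) e
  have hY' : ∀ l, g (MvPolynomial.X l) ∈ FB Ω ξ a ℛ b (m + 1) := hY
  change g (MvPolynomial.X l) ∈ FB Ω ξ a ℛ b m
  obtain ⟨N, c, hc, hpow⟩ := exists_pow_eq (Ω i) (n i) (hhom i) (hiso i) l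
  have hder : ∀ l, g (MvPolynomial.pderiv l (Ω i)) ∈ FB Ω ξ a ℛ b (m + 1 + (m + 1) + D) := by
    intro l
    obtain ⟨l1, l2, hl⟩ := exists_jac (Ω i) l
    have : g (MvPolynomial.pderiv l (Ω i)) =
        PT2.bracket (g (MvPolynomial.X l1)) (g (MvPolynomial.X l2)) := by
      rw [← hl]
      change f (PiTensorProduct.singleAlgHom i (PQuot.mk (Ω i) (ξ i) _)) = _
      rw [← hP i, ← single_bracket P PT hPT, hf]
      rfl
    rw [this]
    exact hbr _ _ _ _ (hY' l1) (hY' l2)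
  have hni := hn i
  have hmem : g (MvPolynomial.X l) ^ (N + (n i - 2) + 1) ∈
      FB Ω ξ a ℛ b (N * (m + 1) + (m + 1 + (m + 1) + D)) := by
    rw [show N + (n i - 2) + 1 = N + (n i - 1) by omega, ← map_pow, hpow, map_sum]
    refine Submodule.sum_mem _ fun l' _ => ?_
    rw [map_mul]
    refine FB_mul hRmul _ _ _ _ ?_ (hder l')
    rw [hg]
    exact filt_aeval (FB_one hR0) (FB_mul hRmul) _ hY' _ _ (hc l')
  refine power_drop hhom hiso hn (fun i => omega_ne_zero _ _ (hhom i) (hiso i)) ha hdecomp hR0 hRmul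
    (hY' l) hmem ?_
  have h1 : D < (m + 1) * (n i - 3) := by
    rw [← hD i]
    exact Nat.mul_lt_mul_of_pos_right hm (by omega)
  obtain ⟨t, ht⟩ : ∃ t, n i = t + 3 := ⟨n i - 3, by omega⟩
  rw [ht] at h1 ⊢
  rw [show t + 3 - 3 = t by omega] at h1
  rw [show N + (t + 3 - 2) + 1 = N + t + 2 by omega]
  nlinarith

lemma final_step (f : (⨂[𝕜] i, PQuot 𝕜 (Ω i) (ξ i)) →ₐ[𝕜] (⨂[𝕜] i, PQuot 𝕜 (Ω i) (ξ i)) ⊗[𝕜] R)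
    (hinj : Function.Injective f) [Nontrivial R] (ha : ∀ i, 0 < a i)
    (h : ∀ (i : Fin d) (l : Fin 3), ∃ u ∈ FP Ω ξ a (a i), f (PiTensorProduct.singleAlgHom (R := 𝕜)
      (A := fun i => PQuot 𝕜 (Ω i) (ξ i)) i (mkA (Ω i) (ξ i) (MvPolynomial.X l))) =
        u ⊗ₜ[𝕜] (1 : R)) :
    Set.range f =
      Set.range fun p : ⨂[𝕜] i, PQuot 𝕜 (Ω i) (ξ i) => p ⊗ₜ[𝕜] (1 : R) := by
  let ι : (⨂[𝕜] i, PQuot 𝕜 (Ω i) (ξ i)) →ₐ[𝕜] (⨂[𝕜] i, PQuot 𝕜 (Ω i) (ξ i)) ⊗[𝕜] R :=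
    Algebra.TensorProduct.includeLeft
  have hι : Function.Injective ι :=
    Algebra.TensorProduct.includeLeft_injective (FaithfulSMul.algebraMap_injective 𝕜 R)
  change Set.range f = Set.range ι
  choose u hu hfu using h
  have hsingle : ∀ i e k, e.IsHomogeneous k → ∃ v ∈ FP Ω ξ a (a i * k),
      f (PiTensorProduct.singleAlgHom (R := 𝕜) (A := fun i => PQuot 𝕜 (Ω i) (ξ i)) i
        (mkA (Ω i) (ξ i) e)) = ι v := by
    intro i e k he
    refine ⟨MvPolynomial.aeval (u i) e, ?_, ?_⟩
    · rw [mul_comm]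
      exact filt_aeval FP_one FP_mul _ (hu i) _ _ he
    · have : (f.comp (PiTensorProduct.singleAlgHom (R := 𝕜)
          (A := fun i => PQuot 𝕜 (Ω i) (ξ i)) i)).comp (mkA (Ω i) (ξ i)) =
          ι.comp (MvPolynomial.aeval (u i)) := by
        apply MvPolynomial.algHom_ext
        intro l
        rw [AlgHom.comp_apply, AlgHom.comp_apply, AlgHom.comp_apply, MvPolynomial.aeval_X]
        exact hfu i l
      exact DFunLike.congr_fun this e
  have hle : ∀ c, (FP Ω ξ a c).map f.toLinearMap ≤ (FP Ω ξ a c).map ι.toLinearMap := by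
    intro c
    rw [FP, Submodule.map_span_le]
    rintro _ ⟨c', hc', e, k, he, hk, rfl⟩
    choose v hv hfv using fun i => hsingle i (e i) (k i) (he i)
    refine ⟨∏ i, v i, FP_mono hc' ?_, ?_⟩
    · rw [← hk]
      exact filt_prod FP_one FP_mul _ _ _ fun i _ => hv i
    · change ι (∏ i, v i) = f _
      rw [piTprod_eq_prod, map_prod, map_prod]
      exact Finset.prod_congr rfl fun i _ => (hfv i).symm
  have heq : ∀ c, (FP Ω ξ a c).map f.toLinearMap = (FP Ω ξ a c).map ι.toLinearMap := by
    intro c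
    have := FP_finite (Ω := Ω) (ξ := ξ) ha c
    refine Submodule.eq_of_le_of_finrank_eq (hle c) ?_
    rw [← LinearEquiv.finrank_eq (Submodule.equivMapOfInjective f.toLinearMap hinj _),
      ← LinearEquiv.finrank_eq (Submodule.equivMapOfInjective ι.toLinearMap hι _)]
  ext y
  constructor
  · rintro ⟨x, rfl⟩
    obtain ⟨c, hc⟩ := FP_exhaust (a := a) x
    have h1 : f x ∈ (FP Ω ξ a c).map ι.toLinearMap := by
      rw [← heq]; exact ⟨x, hc, rfl⟩
    obtain ⟨v, _, hv⟩ := h1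
    exact ⟨v, hv⟩
  · rintro ⟨x, rfl⟩
    obtain ⟨c, hc⟩ := FP_exhaust (a := a) x
    have h1 : ι x ∈ (FP Ω ξ a c).map f.toLinearMap := by
      rw [heq]; exact ⟨x, hc, rfl⟩
    obtain ⟨v, _, hv⟩ := h1
    exact ⟨v, hv⟩

end Main

open PiTensorProduct in
/-- Theorem 0.6 (for `P`): `P = P_{Ω₁-ξ₁} ⊗ ⋯ ⊗ P_{Ω_d-ξ_d}` is `𝒢_w`-Dixmier for
`w ≤ min deg Ωᵢ - 4`: every injective Poisson morphism `P → P ⊗ R` into a connected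
graded Poisson domain `R` generated in degree 1 with `{R₁,R₁} ⊆ R_{w+2}` has image `P ⊗ 𝕜·1`. -/
theorem tensorProduct_of_potentials_relDixmier_graded
    {𝕜 : Type*} [Field 𝕜] [IsAlgClosed 𝕜] [CharZero 𝕜]
    (d : ℕ) (Ω : Fin d → MvPolynomial (Fin 3) 𝕜) (n : Fin d → ℕ)
    (hhom : ∀ i, (Ω i).IsHomogeneous (n i))
    (hiso : ∀ i, HasIsolatedSingularity (Ω i))
    (hdeg : ∀ i, 5 ≤ n i)
    (hdist : Function.Injective n)
    (ξ : Fin d → 𝕜)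
    (P : ∀ i, PoissonStructure 𝕜 (PQuot 𝕜 (Ω i) (ξ i)))
    (hP : ∀ i, IsInducedBracket (Ω i) (ξ i) (P i))
    (PT : PoissonStructure 𝕜 (⨂[𝕜] i, PQuot 𝕜 (Ω i) (ξ i)))
    (hPT : IsPiTensorBracket P PT)
    (w : ℤ) (hw : ∀ i, w ≤ (n i : ℤ) - 4)
    {R : Type*} [CommRing R] [IsDomain R] [Algebra 𝕜 R]
    (PR : PoissonStructure 𝕜 R)
    (ℛ : ℕ → Submodule 𝕜 R)
    (hdecomp : DirectSum.IsInternal ℛ)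
    (hR0 : ℛ 0 = Submodule.span 𝕜 {(1 : R)})
    (hRfd : ∀ i, FiniteDimensional 𝕜 (ℛ i))
    (hRmul : ∀ i j : ℕ, ∀ x ∈ ℛ i, ∀ y ∈ ℛ j, x * y ∈ ℛ (i + j))
    (hRgen : Algebra.adjoin 𝕜 (ℛ 1 : Set R) = ⊤)
    (hRbr : ∀ x ∈ ℛ 1, ∀ y ∈ ℛ 1,
      PR.bracket x y ∈ (if 0 ≤ w + 2 then ℛ (w + 2).toNat else ⊥))
    (PT2 : PoissonStructure 𝕜 ((⨂[𝕜] i, PQuot 𝕜 (Ω i) (ξ i)) ⊗[𝕜] R))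
    (hPT2 : IsTensorBracket PT PR PT2)
    (f : (⨂[𝕜] i, PQuot 𝕜 (Ω i) (ξ i)) →ₐ[𝕜] (⨂[𝕜] i, PQuot 𝕜 (Ω i) (ξ i)) ⊗[𝕜] R)
    (hf : IsPoissonHom PT PT2 f) (hinj : Function.Injective f) :
    Set.range f =
      Set.range fun p : ⨂[𝕜] i, PQuot 𝕜 (Ω i) (ξ i) => p ⊗ₜ[𝕜] (1 : R) := by
  classical
  let w0 : ℕ := max w.toNat 1
  have hw0 : w ≤ w0 := by
    have : (w.toNat : ℤ) ≤ w0 := by exact_mod_cast le_max_left _ _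
    omega
  have hw01 : 1 ≤ w0 := le_max_right _ _
  have hw0n : ∀ i, w0 < n i - 3 := by
    intro i
    have h1 := hw i
    have h2 := hdeg i
    have : w0 ≤ n i - 4 := max_le (by omega) (by omega)
    omega
  let b : ℕ := ∏ j, (n j - 3)
  let q : Fin d → ℕ := fun i => ∏ j ∈ Finset.univ.erase i, (n j - 3)
  have hq : ∀ i, 0 < q i := fun i => Finset.prod_pos fun j _ => by have := hdeg j; omega
  have hqb : ∀ i, (n i - 3) * q i = b := fun i => Finset.mul_prod_erase _ (fun j => n j - 3) (Finset.mem_univ i)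
  let a : Fin d → ℕ := fun i => w0 * q i
  have ha : ∀ i, 0 < a i := fun i => Nat.mul_pos hw01 (hq i)
  have hab : ∀ i, a i < b := fun i => by
    rw [← hqb i]
    exact Nat.mul_lt_mul_of_pos_right (hw0n i) (hq i)
  have hD : ∀ i, a i * (n i - 3) = b * w0 := fun i => by
    rw [← hqb i]; simp only [a]; ring
  have hn3 : ∀ i, 3 ≤ n i := fun i => by have := hdeg i; omega
  have hbr : ∀ m m' X Y, X ∈ FB Ω ξ a ℛ b m → Y ∈ FB Ω ξ a ℛ b m' →
      PT2.bracket X Y ∈ FB Ω ξ a ℛ b (m + m' + b * w0) := fun m m' X Y hX hY =>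
    FB_bracket hhom hn3 P hP PT hPT (fun i => (hD i).le) PR hdecomp hR0 hRmul hRgen w w0 hw0 le_rfl
      hRbr PT2 hPT2 hX hY
  refine final_step (a := a) f hinj ha ?_
  intro i
  have hdesc : ∀ t : ℕ, (∀ l : Fin 3, f (PiTensorProduct.singleAlgHom (R := 𝕜)
      (A := fun i => PQuot 𝕜 (Ω i) (ξ i)) i (mkA (Ω i) (ξ i) (MvPolynomial.X l))) ∈
        FB Ω ξ a ℛ b (a i + t)) → ∀ l : Fin 3, f (PiTensorProduct.singleAlgHom (R := 𝕜)
      (A := fun i => PQuot 𝕜 (Ω i) (ξ i)) i (mkA (Ω i) (ξ i) (MvPolynomial.X l))) ∈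
        FB Ω ξ a ℛ b (a i) := by
    intro t
    induction t with
    | zero => exact fun h => h
    | succ t ih =>
      intro h
      exact ih (descent_step hhom hiso hdeg ha P hP PT hPT hD hdecomp hR0 hRmul PT2 hbr f hf i
        (a i + t) (by omega) h)
  choose m hm using fun l : Fin 3 => FB_exhaust (a := a) (b := b) hdecomp
    (f (PiTensorProduct.singleAlgHom (R := 𝕜)
      (A := fun i => PQuot 𝕜 (Ω i) (ξ i)) i (mkA (Ω i) (ξ i) (MvPolynomial.X l))))
  have hfin := hdesc (∑ l, m l) (fun l => FB_mono (by
    have : m l ≤ ∑ l, m l := Finset.single_le_sum (fun _ _ => Nat.zero_le _) (Finset.mem_univ l)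
    omega) (hm l))
  intro l
  exact FB_small hR0 (hab i) (hfin l)
end

section
/- Let 𝕜 be a field of characteristic zero and let A = L_Λ(𝕜) be a Poisson torus of rank n which is Poisson simple. The following are equivalent: (1) every Poisson 𝕜-algebra endomorphism of A is bijective; (2) every Poisson subalgebra 𝒬 ⊆ A which is isomorphic to A as a Poisson 𝕜-algebra satisfies 𝒬 = A; (3) whenever z_1,…,z_n are units of A which, together with their inverses, generate A as a 𝕜-algebra and satisfy {z_i,z_j} = λ'_ij z_i z_j for some skew-symmetric matrix Λ' = (λ'_ij) ∈ M_n(𝕜), and whenever G = (g_ij) ∈ GL_n(ℤ) is an invertible integer matrix and p_1,…,p_n are positive integers such that λ'_ij = Σ_{k,t=1}^n p_k p_t g_ki g_tj λ'_kt for all 1 ≤ i,j ≤ n, then p_1 = ⋯ = p_n = 1. -/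
open scoped TensorProduct

/-- Condition (1) of Lemma 2.8: every Poisson endomorphism of the torus is bijective. -/
def TorusEndosBijective {𝕜 : Type*} [Field 𝕜] (n : ℕ)
    (P : PoissonStructure 𝕜 (AddMonoidAlgebra 𝕜 (Fin n → ℤ))) : Prop :=
  ∀ f : AddMonoidAlgebra 𝕜 (Fin n → ℤ) →ₐ[𝕜] AddMonoidAlgebra 𝕜 (Fin n → ℤ),
    IsPoissonHom P P f → Function.Bijective f

/-- Condition (2) of Lemma 2.8: every Poisson subalgebra of the torus which is isomorphic
to the torus as a Poisson algebra is the whole torus. -/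
def TorusPoissonSubalgebrasRigid {𝕜 : Type*} [Field 𝕜] (n : ℕ)
    (P : PoissonStructure 𝕜 (AddMonoidAlgebra 𝕜 (Fin n → ℤ))) : Prop :=
  ∀ Q : Subalgebra 𝕜 (AddMonoidAlgebra 𝕜 (Fin n → ℤ)),
    (∀ x ∈ Q, ∀ y ∈ Q, P.bracket x y ∈ Q) →
    (∃ e : AddMonoidAlgebra 𝕜 (Fin n → ℤ) ≃ₐ[𝕜] Q,
      ∀ a b : AddMonoidAlgebra 𝕜 (Fin n → ℤ),
        (e (P.bracket a b) : AddMonoidAlgebra 𝕜 (Fin n → ℤ)) =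
          P.bracket (e a : AddMonoidAlgebra 𝕜 (Fin n → ℤ))
            (e b : AddMonoidAlgebra 𝕜 (Fin n → ℤ))) →
    Q = ⊤

/-- Condition (3) of Lemma 2.8, on re-presentations of the torus by units `z₁,…,zₙ` with
skew-symmetric log-Poisson matrix `Λ'`. -/
def TorusMatrixCondition {𝕜 : Type*} [Field 𝕜] (n : ℕ)
    (P : PoissonStructure 𝕜 (AddMonoidAlgebra 𝕜 (Fin n → ℤ))) : Prop :=
  ∀ (z : Fin n → (AddMonoidAlgebra 𝕜 (Fin n → ℤ))ˣ)
    (Λ' : Matrix (Fin n) (Fin n) 𝕜), Λ'.transpose = -Λ' →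
    Algebra.adjoin 𝕜
      ((Set.range fun i => ((z i : AddMonoidAlgebra 𝕜 (Fin n → ℤ)))) ∪
        (Set.range fun i => (((z i)⁻¹ : (AddMonoidAlgebra 𝕜 (Fin n → ℤ))ˣ) :
          AddMonoidAlgebra 𝕜 (Fin n → ℤ)))) = ⊤ →
    (∀ i j, P.bracket (z i : AddMonoidAlgebra 𝕜 (Fin n → ℤ))
        (z j : AddMonoidAlgebra 𝕜 (Fin n → ℤ)) =
      Λ' i j • ((z i : AddMonoidAlgebra 𝕜 (Fin n → ℤ)) *
        (z j : AddMonoidAlgebra 𝕜 (Fin n → ℤ)))) →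
    ∀ G : Matrix (Fin n) (Fin n) ℤ, IsUnit G.det →
    ∀ p : Fin n → ℕ, (∀ i, 0 < p i) →
    (∀ i j, Λ' i j =
      ∑ s : Fin n, ∑ t : Fin n,
        ((p s : 𝕜) * (p t : 𝕜) * ((G s i : ℤ) : 𝕜) * ((G t j : ℤ) : 𝕜)) * Λ' s t) →
    ∀ i, p i = 1


namespace PTorus

open AddMonoidAlgebra

variable {𝕜 : Type*} [Field 𝕜] {n : ℕ}

instance instTwoUnique : TwoUniqueSums (Fin n → ℤ) := inferInstance

/-- Units of the Laurent polynomial ring are monomials. -/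
theorem unit_eq_single (z w : AddMonoidAlgebra 𝕜 (Fin n → ℤ)) (h : z * w = 1) :
    ∃ (u : Fin n → ℤ) (c : 𝕜), c ≠ 0 ∧ z = single u c := by
  classical
  have hz : z ≠ 0 := by rintro rfl; simp at h
  have hw : w ≠ 0 := by rintro rfl; simp at h
  have hzs : z.coeff.support.Nonempty := by
    rw [Finsupp.support_nonempty_iff]; simpa using hz
  have hws : w.coeff.support.Nonempty := by
    rw [Finsupp.support_nonempty_iff]; simpa using hw
  by_cases hc : 1 < z.coeff.support.card * w.coeff.support.card
  · exfalso
    obtain ⟨p1, hp1, p2, hp2, hne, h1, h2⟩ := TwoUniqueSums.uniqueAdd_of_one_lt_card hc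
    rw [Finset.mem_product] at hp1 hp2
    have key : ∀ p : (Fin n → ℤ) × (Fin n → ℤ), p.1 ∈ z.coeff.support → p.2 ∈ w.coeff.support →
        UniqueAdd z.coeff.support w.coeff.support p.1 p.2 → p.1 + p.2 = 0 := by
      intro p ha hb hu
      by_contra hs
      have := coeff_mul_add_of_uniqueAdd hu
      rw [h] at this
      rw [Finsupp.mem_support_iff] at ha hb
      have h3 := mul_ne_zero ha hb
      rw [← this, one_def] at h3
      apply h3
      simp [Ne.symm hs]
    have e1 := key p1 hp1.1 hp1.2 h1
    have e2 := key p2 hp2.1 hp2.2 h2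
    have := h1 hp2.1 hp2.2 (e2.trans e1.symm)
    exact hne (Prod.ext this.1.symm this.2.symm)
  · have hA := hzs.card_pos
    have hB := hws.card_pos
    have : z.coeff.support.card = 1 := by nlinarith
    obtain ⟨u, hu⟩ := Finset.card_eq_one.1 this
    have h1 := Finsupp.support_eq_singleton.1 hu
    refine ⟨u, z.coeff u, h1.1, ?_⟩
    apply coeff_injective
    simpa using h1.2

/-- The bilinear form of the torus. -/
noncomputable def tform (Λ : Matrix (Fin n) (Fin n) 𝕜) :
    (Fin n → ℤ) →ₗ[ℤ] (Fin n → ℤ) →ₗ[ℤ] 𝕜 :=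
  LinearMap.mk₂ ℤ (fun u v => ∑ i, ∑ j, (u i : 𝕜) * Λ i j * (v j : 𝕜))
    (by intro a b c; simp [add_mul, Finset.sum_add_distrib])
    (by intro a b c; simp [Finset.mul_sum, mul_assoc])
    (by intro a b c; simp [mul_add, Finset.sum_add_distrib])
    (by intro a b c; simp only [Pi.smul_apply, smul_eq_mul, Int.cast_mul, zsmul_eq_mul, Finset.mul_sum]
        refine Finset.sum_congr rfl fun i _ => Finset.sum_congr rfl fun j _ => by ring)

theorem tform_skew (Λ : Matrix (Fin n) (Fin n) 𝕜) (hskew : Λ.transpose = -Λ) (u v : Fin n → ℤ) :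
    tform Λ u v = - tform Λ v u := by
  simp only [tform, LinearMap.mk₂_apply, ← Finset.sum_neg_distrib]
  rw [Finset.sum_comm]
  refine Finset.sum_congr rfl fun i _ => Finset.sum_congr rfl fun j _ => ?_
  have := congrFun (congrFun hskew i) j
  simp only [Matrix.transpose_apply, Matrix.neg_apply] at this
  rw [this]; ring

theorem tform_sum (Λ : Matrix (Fin n) (Fin n) 𝕜) (a b : Fin n → ℤ) (x : Fin n → Fin n → ℤ) :
    tform Λ (∑ s, a s • x s) (∑ t, b t • x t) =
      ∑ s, ∑ t, ((a s : 𝕜) * (b t : 𝕜)) * tform Λ (x s) (x t) := by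
  have h : ∀ (y : Fin n → ℤ), tform Λ y (∑ t, b t • x t) = ∑ t, (b t : 𝕜) * tform Λ y (x t) := by
    intro y
    rw [map_sum]
    refine Finset.sum_congr rfl fun t _ => ?_
    rw [map_smul, zsmul_eq_mul]
  rw [map_sum (tform Λ), LinearMap.sum_apply]
  refine Finset.sum_congr rfl fun s _ => ?_
  rw [map_smul, LinearMap.smul_apply, h, zsmul_eq_mul, Finset.mul_sum]
  refine Finset.sum_congr rfl fun t _ => ?_
  ring

section bracket
variable {A : Type*} [CommRing A] [Algebra 𝕜 A] (P : PoissonStructure 𝕜 A)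
theorem add_right (a b c : A) : P.bracket a (b + c) = P.bracket a b + P.bracket a c := by
  rw [P.antisymm, P.add_left, P.antisymm a b, P.antisymm a c]; ring
theorem smul_right (r : 𝕜) (a b : A) : P.bracket a (r • b) = r • P.bracket a b := by
  rw [P.antisymm, P.smul_left, P.antisymm a b, smul_neg]
end bracket

variable (Λ : Matrix (Fin n) (Fin n) 𝕜) (P : PoissonStructure 𝕜 (AddMonoidAlgebra 𝕜 (Fin n → ℤ)))


theorem bracket_single (hP : IsTorusBracket n Λ P) (u v : Fin n → ℤ) (c d : 𝕜) :
    P.bracket (single u c) (single v d) = tform Λ u v • (single u c * single v d) := by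
  have hc : (single u c : AddMonoidAlgebra 𝕜 (Fin n → ℤ)) = c • single u 1 := by simp
  have hd : (single v d : AddMonoidAlgebra 𝕜 (Fin n → ℤ)) = d • single v 1 := by simp
  rw [hc, hd, P.smul_left, smul_right, hP]
  simp only [tform, LinearMap.mk₂_apply, smul_single, single_mul_single, smul_eq_mul]
  congr 1; ring

theorem injective_of_hom [CharZero 𝕜] (hsimple : IsPoissonSimple P)
    (f : AddMonoidAlgebra 𝕜 (Fin n → ℤ) →ₐ[𝕜] AddMonoidAlgebra 𝕜 (Fin n → ℤ))
    (hf : IsPoissonHom P P f) : Function.Injective f := by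
  have h0 : ∀ a, P.bracket a 0 = 0 := fun a => by simpa using smul_right P (0:𝕜) a 0
  rcases hsimple (RingHom.ker f) (by
    intro x y hy
    rw [RingHom.mem_ker] at hy ⊢
    rw [hf, hy, h0]) with h | h
  · exact (RingHom.injective_iff_ker_eq_bot f).2 h
  · exfalso
    have : (1 : AddMonoidAlgebra 𝕜 (Fin n → ℤ)) ∈ RingHom.ker f := by rw [h]; trivial
    rw [RingHom.mem_ker, map_one] at this
    exact one_ne_zero this

theorem one_iff_two [CharZero 𝕜] (hsimple : IsPoissonSimple P) :
    TorusEndosBijective n P ↔ TorusPoissonSubalgebrasRigid n P := by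
  constructor
  · intro h Q hQ ⟨e, he⟩
    have := h (Q.val.comp e.toAlgHom) (fun a b => by simpa using he a b)
    rw [eq_top_iff]
    intro x _
    obtain ⟨a, rfl⟩ := this.2 x
    exact (e a).2
  · intro h f hf
    have hinj := injective_of_hom P hsimple f hf
    refine ⟨hinj, ?_⟩
    have := h f.range (by
      rintro _ ⟨a, rfl⟩ _ ⟨b, rfl⟩
      exact ⟨P.bracket a b, hf a b⟩) ⟨AlgEquiv.ofInjective f hinj, fun a b => by simpa using hf a b⟩
    exact AlgHom.range_eq_top f |>.1 this

/-- If a submodule of exponents has all its quotient images scalar it is everything. -/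
theorem eq_top_of_scalar (N : Submodule ℤ (Fin n → ℤ))
    (h : ∀ a, mapDomainAlgHom 𝕜 𝕜 (N.mkQ.toAddMonoidHom) a ∈
      (⊥ : Subalgebra 𝕜 (AddMonoidAlgebra 𝕜 ((Fin n → ℤ) ⧸ N)))) : N = ⊤ := by
  rw [eq_top_iff]
  intro v _
  obtain ⟨c, hc⟩ := Algebra.mem_bot.1 (h (single v 1))
  simp only [mapDomainAlgHom_apply, mapDomain_single] at hc
  have h2 : (single (0 : (Fin n → ℤ) ⧸ N) c) = single (N.mkQ v) (1:𝕜) := by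
    simpa using hc
  have h3 := congrArg coeff h2
  simp only [coeff_single] at h3
  rw [Finsupp.single_eq_single_iff] at h3
  rcases h3 with h3 | h3
  · exact (Submodule.Quotient.mk_eq_zero N).1 h3.1.symm
  · exact absurd h3.2 one_ne_zero

theorem poissonHom_of_single (hP : IsTorusBracket n Λ P)
    (M : (Fin n → ℤ) →ₗ[ℤ] (Fin n → ℤ))
    (hM : ∀ u v, tform Λ (M u) (M v) = tform Λ u v) :
    IsPoissonHom P P (mapDomainAlgHom 𝕜 𝕜 M.toAddMonoidHom) := by
  intro a b
  have hz : ∀ a, P.bracket a 0 = 0 := fun a => by simpa using smul_right P (0:𝕜) a 0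
  have hz' : ∀ a, P.bracket 0 a = 0 := fun a => by simpa using P.smul_left (0:𝕜) 0 a
  induction a using AddMonoidAlgebra.induction_linear with
  | zero => simp [hz']
  | add x y hx hy => rw [P.add_left, map_add, map_add, hx, hy, P.add_left]
  | single u c =>
    induction b using AddMonoidAlgebra.induction_linear with
    | zero => simp [hz]
    | add x y hx hy => rw [add_right, map_add, map_add, hx, hy, add_right]
    | single v d =>
      rw [bracket_single Λ P hP]
      simp only [mapDomainAlgHom_apply, mapDomain_single, single_mul_single,
        smul_single]
      rw [bracket_single Λ P hP]
      simp [hM, single_mul_single]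

theorem one_to_three [CharZero 𝕜] (hP : IsTorusBracket n Λ P) (h1 : TorusEndosBijective n P) :
    TorusMatrixCondition n P := by
  intro z Λ' _ hgen hbr G hG p hp hΛ
  have hu : ∀ i, ∃ (u : Fin n → ℤ) (c : 𝕜), c ≠ 0 ∧
      (z i : AddMonoidAlgebra 𝕜 (Fin n → ℤ)) = single u c :=
    fun i => unit_eq_single _ _ (z i).mul_inv
  choose u c hc hz using hu
  have hΛ' : ∀ i j, Λ' i j = tform Λ (u i) (u j) := by
    intro i j
    have h := hbr i j
    rw [hz, hz, bracket_single Λ P hP, single_mul_single] at h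
    simp only [smul_single, smul_eq_mul] at h
    have h3 := single_right_injective h
    exact (mul_right_cancel₀ (mul_ne_zero (hc i) (hc j)) h3).symm
  -- the exponents span
  have hspan : Submodule.span ℤ (Set.range u) = ⊤ := by
    set N := Submodule.span ℤ (Set.range u) with hN
    apply eq_top_of_scalar (𝕜 := 𝕜)
    have hle : Algebra.adjoin 𝕜
      ((Set.range fun i => ((z i : AddMonoidAlgebra 𝕜 (Fin n → ℤ)))) ∪
        (Set.range fun i => (((z i)⁻¹ : (AddMonoidAlgebra 𝕜 (Fin n → ℤ))ˣ) :
          AddMonoidAlgebra 𝕜 (Fin n → ℤ)))) ≤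
        (⊥ : Subalgebra 𝕜 (AddMonoidAlgebra 𝕜 ((Fin n → ℤ) ⧸ N))).comap
          (mapDomainAlgHom 𝕜 𝕜 (N.mkQ.toAddMonoidHom)) := by
      have hs : ∀ (_ : Fin n) (c : 𝕜), ∀ v ∈ N, mapDomainAlgHom 𝕜 𝕜 (N.mkQ.toAddMonoidHom) (single v c) ∈
          (⊥ : Subalgebra 𝕜 (AddMonoidAlgebra 𝕜 ((Fin n → ℤ) ⧸ N))) := by
        intro i c v hv
        rw [Algebra.mem_bot]
        refine ⟨c, ?_⟩
        have : N.mkQ v = 0 := by simpa using hv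
        simp only [mapDomainAlgHom_apply, mapDomain_single]
        simp [hv, (Submodule.Quotient.mk_eq_zero N).2 hv]
      have hmem : ∀ i, u i ∈ N := fun i => Submodule.subset_span ⟨i, rfl⟩
      rw [Algebra.adjoin_le_iff]
      rintro _ (⟨i, rfl⟩ | ⟨i, rfl⟩)
      · have := hs i (c i) (u i) (hmem i)
        rw [← hz] at this
        exact this
      · have := hs i (c i)⁻¹ (-u i) (N.neg_mem (hmem i))
        have hi : (((z i)⁻¹ : (AddMonoidAlgebra 𝕜 (Fin n → ℤ))ˣ) :
          AddMonoidAlgebra 𝕜 (Fin n → ℤ)) = single (-u i) (c i)⁻¹ := by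
          exact Units.inv_eq_of_mul_eq_one_right (by rw [hz, single_mul_single]; simp [hc, one_def])
        rw [← hi] at this
        exact this
    intro a
    have : a ∈ (⊤ : Subalgebra 𝕜 (AddMonoidAlgebra 𝕜 (Fin n → ℤ))) := trivial
    rw [← hgen] at this
    exact hle this
  let b : Module.Basis (Fin n) ℤ (Fin n → ℤ) :=
    basisOfTopLeSpanOfCardEqFinrank u hspan.ge (by simp)
  have hb : ∀ i, b i = u i := fun i => by simp [b]
  let T : Matrix (Fin n) (Fin n) ℤ := Matrix.diagonal (fun i => (p i : ℤ)) * G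
  let M := Matrix.toLin b b T
  have hMb : ∀ i, M (b i) = ∑ s, ((p s : ℤ) * G s i) • b s := by
    intro i
    simp [M, T, Matrix.toLin_self, Matrix.diagonal_mul]
  have hM : ∀ x y, tform Λ (M x) (M y) = tform Λ x y := by
    have : (tform Λ).compl₁₂ M M = tform Λ := by
      refine LinearMap.ext_basis b b fun i j => ?_
      rw [LinearMap.compl₁₂_apply, hMb, hMb, hb, hb, ← hΛ', hΛ i j]
      rw [tform_sum]
      simp only [hb, ← hΛ']
      refine Finset.sum_congr rfl fun s _ => Finset.sum_congr rfl fun t _ => ?_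
      push_cast; ring
    intro x y
    exact LinearMap.congr_fun (LinearMap.congr_fun this x) y
  have hsurj := (h1 _ (poissonHom_of_single Λ P hP M hM)).2
  have hMtop : LinearMap.range M = ⊤ := by
    apply eq_top_of_scalar (𝕜 := 𝕜)
    intro a
    obtain ⟨x, rfl⟩ := hsurj a
    induction x using AddMonoidAlgebra.induction_linear with
    | zero => simp
    | add x y hx hy => rw [map_add, map_add]; exact add_mem hx hy
    | single v d =>
      rw [Algebra.mem_bot]
      refine ⟨d, ?_⟩
      have : (Submodule.Quotient.mk (M v) : (Fin n → ℤ) ⧸ LinearMap.range M) = 0 :=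
        (Submodule.Quotient.mk_eq_zero _).2 ⟨v, rfl⟩
      simp only [mapDomainAlgHom_apply, mapDomain_single]
      simp [this]
  have hbij : Function.Bijective M :=
    OrzechProperty.bijective_of_surjective_endomorphism M (LinearMap.range_eq_top.1 hMtop)
  have hdet : IsUnit (LinearMap.det M) :=
    (LinearEquiv.ofBijective M hbij).isUnit_det'
  rw [LinearMap.det_toLin, Matrix.det_mul, Matrix.det_diagonal] at hdet
  have hprod := isUnit_of_mul_isUnit_left hdet
  intro i
  have : IsUnit (p i : ℤ) := isUnit_of_dvd_unit (Finset.dvd_prod_of_mem (fun i => (p i : ℤ)) (Finset.mem_univ i)) hprod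
  rw [Int.isUnit_iff] at this
  have := hp i
  omega

/-- Smith normal form of an injective endomorphism. -/
theorem smith (M : (Fin n → ℤ) →ₗ[ℤ] (Fin n → ℤ)) (hM : Function.Injective M) :
    ∃ (v b : Module.Basis (Fin n) ℤ (Fin n → ℤ)) (p : Fin n → ℕ),
      (∀ i, 0 < p i) ∧ ∀ i, M (v i) = (p i : ℤ) • b i := by
  classical
  let e := LinearEquiv.ofInjective M hM
  obtain ⟨b, a, b', hb⟩ := Submodule.exists_smith_normal_form_of_rank_eq (Pi.basisFun ℤ (Fin n))
    (N := LinearMap.range M) (by rw [← e.finrank_eq])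
  let v := b'.map e.symm
  have hv : ∀ i, M (v i) = a i • b i := by
    intro i
    rw [← hb i]
    have : e (v i) = b' i := by simp [v]
    rw [← this]; rfl
  have ha : ∀ i, a i ≠ 0 := by
    intro i h
    have h2 := hv i
    rw [h, zero_smul, ← map_zero M] at h2
    exact v.ne_zero i (hM h2)
  have hsu : ∀ i, IsUnit (Int.sign (a i)) := fun i => by
    rw [Int.isUnit_iff]
    rcases lt_or_gt_of_ne (ha i) with h | h
    · right; exact Int.sign_eq_neg_one_of_neg h
    · left; exact Int.sign_eq_one_of_pos h
  refine ⟨v, b.isUnitSMul hsu, fun i => (a i).natAbs, fun i => Int.natAbs_pos.2 (ha i), fun i => ?_⟩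
  rw [hv, Module.Basis.isUnitSMul_apply, smul_smul, mul_comm, Int.sign_mul_natAbs]

theorem three_to_one [CharZero 𝕜] (hskew : Λ.transpose = -Λ) (hP : IsTorusBracket n Λ P)
    (hsimple : IsPoissonSimple P)
    (h3 : TorusMatrixCondition n P) : TorusEndosBijective n P := by
  classical
  intro f hf
  have hinj := injective_of_hom P hsimple f hf
  refine ⟨hinj, ?_⟩
  have sinj : ∀ (u v : Fin n → ℤ) (c d : 𝕜), c ≠ 0 →
      (single u c : AddMonoidAlgebra 𝕜 (Fin n → ℤ)) = single v d → u = v ∧ c = d := by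
    intro u v c d hc h
    have h3 := congrArg coeff h
    simp only [coeff_single] at h3
    rw [Finsupp.single_eq_single_iff] at h3
    rcases h3 with h3 | h3
    · exact h3
    · exact absurd h3.1 hc
  have hu : ∀ u : Fin n → ℤ, ∃ (v : Fin n → ℤ) (c : 𝕜), c ≠ 0 ∧ f (single u 1) = single v c := by
    intro u
    refine unit_eq_single _ (f (single (-u) 1)) ?_
    rw [← map_mul, single_mul_single]
    simp [← one_def]
  choose m c hc hfm using hu
  have hadd : ∀ u v, m (u + v) = m u + m v := by
    intro u v
    have h : f (single (u + v) 1) = f (single u 1) * f (single v 1) := by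
      rw [← map_mul, single_mul_single, one_mul]
    rw [hfm, hfm, hfm, single_mul_single] at h
    exact (sinj _ _ _ _ (hc _) h).1
  let M : (Fin n → ℤ) →ₗ[ℤ] (Fin n → ℤ) := (AddMonoidHom.mk' m hadd).toIntLinearMap
  have hMm : ∀ u, M u = m u := fun u => rfl
  have hMB : ∀ u v, tform Λ (M u) (M v) = tform Λ u v := by
    intro u v
    have h := hf (single u 1) (single v 1)
    rw [bracket_single Λ P hP, map_smul, map_mul, hfm, hfm, bracket_single Λ P hP,
      single_mul_single, smul_single, smul_single] at h
    have h3 := single_right_injective h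
    exact (mul_right_cancel₀ (mul_ne_zero (hc u) (hc v)) h3).symm
  have hMinj : Function.Injective M := by
    rw [injective_iff_map_eq_zero]
    intro u h0
    have : f (single u 1) = f (single 0 (c u)) := by
      rw [hfm, ← hMm, h0]
      have : (single (0 : Fin n → ℤ) (c u)) = algebraMap 𝕜 _ (c u) := by simp
      rw [this, AlgHom.commutes]
    exact (sinj _ _ _ _ one_ne_zero (hinj this)).1
  obtain ⟨v, b, p, hp, hv⟩ := smith M hMinj
  let z : Fin n → (AddMonoidAlgebra 𝕜 (Fin n → ℤ))ˣ := fun i =>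
    ⟨single (b i) 1, single (-b i) 1, by simp [single_mul_single, one_def],
      by simp [single_mul_single, one_def]⟩
  have hp1 : ∀ i, p i = 1 := by
    refine h3 z (Matrix.of fun i j => tform Λ (b i) (b j)) ?_ ?_ ?_ (v.toMatrix b) ?_ p hp ?_
    · ext i j
      simp [tform_skew Λ hskew (b j) (b i)]
    · set S := Algebra.adjoin 𝕜
        ((Set.range fun i => ((z i : AddMonoidAlgebra 𝕜 (Fin n → ℤ)))) ∪
          (Set.range fun i => (((z i)⁻¹ : (AddMonoidAlgebra 𝕜 (Fin n → ℤ))ˣ) :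
            AddMonoidAlgebra 𝕜 (Fin n → ℤ)))) with hS
      let L : AddSubgroup (Fin n → ℤ) :=
        { carrier := {w | (single w 1 : AddMonoidAlgebra 𝕜 (Fin n → ℤ)) ∈ S ∧
            (single (-w) 1 : AddMonoidAlgebra 𝕜 (Fin n → ℤ)) ∈ S}
          zero_mem' := by
            simp only [Set.mem_ofPred_eq, neg_zero, ← one_def]
            exact ⟨S.one_mem, S.one_mem⟩
          add_mem' := by
            rintro x y ⟨hx, hx'⟩ ⟨hy, hy'⟩
            refine ⟨?_, ?_⟩
            · simpa [single_mul_single] using S.mul_mem hx hy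
            · simpa [single_mul_single, add_comm] using S.mul_mem hx' hy'
          neg_mem' := by
            rintro x ⟨hx, hx'⟩
            exact ⟨hx', by simpa using hx⟩ }
      have hL : ∀ w, w ∈ L := by
        have : Submodule.span ℤ (Set.range b) ≤ AddSubgroup.toIntSubmodule L := by
          rw [Submodule.span_le]
          rintro _ ⟨i, rfl⟩
          exact ⟨Algebra.subset_adjoin (Or.inl ⟨i, rfl⟩), Algebra.subset_adjoin (Or.inr ⟨i, rfl⟩)⟩
        rw [b.span_eq] at this
        intro w
        exact this (Submodule.mem_top (x := w))
      rw [eq_top_iff]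
      intro x _
      induction x using AddMonoidAlgebra.induction_linear with
      | zero => exact S.zero_mem
      | add x y hx hy => exact S.add_mem (hx trivial) (hy trivial)
      | single w d => simpa using S.smul_mem (hL w).1 d
    · intro i j
      exact bracket_single Λ P hP _ _ _ _
    · have := v.isUnit_det b
      rwa [Module.Basis.det_apply] at this
    · intro i j
      have hMb : ∀ i, M (b i) = ∑ s, ((p s : ℤ) * v.toMatrix b s i) • b s := by
        intro i
        conv_lhs => rw [← v.sum_toMatrix_smul_self b i]
        rw [map_sum]
        refine Finset.sum_congr rfl fun s _ => ?_
        rw [map_smul, hv, smul_smul, mul_comm]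
      simp only [Matrix.of_apply]
      rw [← hMB, hMb, hMb]
      rw [tform_sum]
      refine Finset.sum_congr rfl fun s _ => Finset.sum_congr rfl fun t _ => ?_
      push_cast; ring
  have hMs : Function.Surjective M := by
    rw [← LinearMap.range_eq_top, eq_top_iff, ← b.span_eq, Submodule.span_le]
    rintro _ ⟨i, rfl⟩
    exact ⟨v i, by rw [hv, hp1]; simp⟩
  intro x
  change x ∈ f.range
  induction x using AddMonoidAlgebra.induction_linear with
  | zero => exact f.range.zero_mem
  | add x y hx hy => exact f.range.add_mem hx hy
  | single w d =>
    obtain ⟨u, rfl⟩ := hMs w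
    refine ⟨single u (d * (c u)⁻¹), ?_⟩
    have : (single u (d * (c u)⁻¹) : AddMonoidAlgebra 𝕜 (Fin n → ℤ)) =
      (d * (c u)⁻¹) • single u 1 := by simp
    change f _ = _
    rw [this, map_smul, hfm, smul_single, smul_eq_mul, inv_mul_cancel_right₀ (hc u), hMm]

end PTorus

/-- Lemma 2.8: for a simple Poisson torus, conditions (1), (2) and (3) are equivalent. -/
theorem simple_poissonTorus_dixmier_tfae
    {𝕜 : Type*} [Field 𝕜] [CharZero 𝕜] (n : ℕ) (Λ : Matrix (Fin n) (Fin n) 𝕜)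
    (hskew : Λ.transpose = -Λ)
    (P : PoissonStructure 𝕜 (AddMonoidAlgebra 𝕜 (Fin n → ℤ)))
    (hP : IsTorusBracket n Λ P)
    (hsimple : IsPoissonSimple P) :
    (TorusEndosBijective n P ↔ TorusPoissonSubalgebrasRigid n P) ∧
    (TorusPoissonSubalgebrasRigid n P ↔ TorusMatrixCondition n P) := by
  have h12 := PTorus.one_iff_two P hsimple
  refine ⟨h12, ?_⟩
  rw [← h12]
  exact ⟨PTorus.one_to_three Λ P hP, PTorus.three_to_one Λ P hskew hP hsimple⟩
end

section
/- Let 𝕜 be an algebraically closed field of characteristic zero. Let Ω ∈ 𝕜[x,y,z] be a homogeneous polynomial of degree at least 4 with an isolated singularity, ξ ∈ 𝕜, and let K be a commutative 𝕜-algebra which is a field equipped with a Poisson bracket (a Poisson field over 𝕜). Then every injective K-algebra endomorphism of K ⊗_𝕜 P_{Ω−ξ} (with the tensor Poisson bracket) which preserves the Poisson bracket is bijective. -/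
open scoped TensorProduct

namespace PotDix
open MvPolynomial

/-- all monomials of `p` have degree `< n` -/
def LTdeg {K : Type*} [CommRing K] (n : ℕ) (p : MvPolynomial (Fin 3) K) : Prop :=
  ∀ s ∈ p.support, s.degree < n

section
variable {K : Type*} [CommRing K]

lemma LTdeg.add {n : ℕ} {p q : MvPolynomial (Fin 3) K} (hp : LTdeg n p) (hq : LTdeg n q) :
    LTdeg n (p + q) := by
  classical
  intro s hs
  rcases Finset.mem_union.1 (support_add hs) with h | h
  · exact hp s h
  · exact hq s h

lemma LTdeg.zero (n : ℕ) : LTdeg n (0 : MvPolynomial (Fin 3) K) := by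
  intro s hs; simp at hs

lemma le_totalDegree' {p : MvPolynomial (Fin 3) K} {s : Fin 3 →₀ ℕ} (h : s ∈ p.support) :
    s.degree ≤ p.totalDegree := by
  exact le_totalDegree h

lemma totalDegree_le_of {n : ℕ} {p : MvPolynomial (Fin 3) K}
    (h : ∀ s ∈ p.support, s.degree ≤ n) : p.totalDegree ≤ n :=
  Finset.sup_le fun s hs => h s hs

lemma LTdeg.mul {m n : ℕ} {p q : MvPolynomial (Fin 3) K} (hp : p.totalDegree ≤ m)
    (hq : LTdeg n q) : LTdeg (m + n) (p * q) := by
  classical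
  intro s hs
  obtain ⟨a, ha, b, hb, rfl⟩ := Finset.mem_add.1 (support_mul p q hs)
  have h1 := le_totalDegree' ha
  have h2 := hq b hb
  rw [map_add]; omega

lemma LTdeg.totalDegree_le {n : ℕ} {p : MvPolynomial (Fin 3) K} (hp : LTdeg (n + 1) p) :
    p.totalDegree ≤ n := by
  refine totalDegree_le_of fun s hs => ?_
  have := hp s hs
  omega

lemma LTdeg.of_totalDegree {n : ℕ} {p : MvPolynomial (Fin 3) K} (hp : p.totalDegree < n) :
    LTdeg n p := fun _ hs => lt_of_le_of_lt (le_totalDegree' hs) hp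

lemma LTdeg.component {n : ℕ} {p : MvPolynomial (Fin 3) K} (hp : LTdeg n p) :
    homogeneousComponent n p = 0 := by
  apply homogeneousComponent_eq_zero'
  intro s hs
  exact (hp s hs).ne

/-- `a` is the degree `n` leading part of `p` -/
def Rel (n : ℕ) (p a : MvPolynomial (Fin 3) K) : Prop :=
  a.IsHomogeneous n ∧ LTdeg n (p - a)

lemma Rel.totalDegree_le {n : ℕ} {p a : MvPolynomial (Fin 3) K} (h : Rel n p a) :
    p.totalDegree ≤ n := by
  have : p = a + (p - a) := by ring
  rw [this]
  refine (totalDegree_add _ _).trans (max_le h.1.totalDegree_le ?_)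
  exact LTdeg.totalDegree_le fun s hs => (h.2 s hs).trans (Nat.lt_succ_self n)

lemma Rel.add {n : ℕ} {p a q b : MvPolynomial (Fin 3) K} (h : Rel n p a) (h' : Rel n q b) :
    Rel n (p + q) (a + b) := by
  refine ⟨h.1.add h'.1, ?_⟩
  have : p + q - (a + b) = (p - a) + (q - b) := by ring
  rw [this]; exact h.2.add h'.2

lemma Rel.zero (n : ℕ) : Rel n (0 : MvPolynomial (Fin 3) K) 0 :=
  ⟨isHomogeneous_zero _ _ _, by simpa using LTdeg.zero n⟩

lemma Rel.C (c : K) : Rel 0 (C c : MvPolynomial (Fin 3) K) (C c) :=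
  ⟨isHomogeneous_C _ _, by simpa using LTdeg.zero 0⟩

lemma Rel.mul {m n : ℕ} {p a q b : MvPolynomial (Fin 3) K} (h : Rel m p a) (h' : Rel n q b) :
    Rel (m + n) (p * q) (a * b) := by
  refine ⟨h.1.mul h'.1, ?_⟩
  have : p * q - a * b = p * (q - b) + b * (p - a) := by ring
  rw [this]
  refine (LTdeg.mul h.totalDegree_le h'.2).add ?_
  rw [add_comm m n]
  exact LTdeg.mul h'.1.totalDegree_le h.2

lemma Rel.pow {m : ℕ} {p a : MvPolynomial (Fin 3) K} (h : Rel m p a) (k : ℕ) :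
    Rel (k * m) (p ^ k) (a ^ k) := by
  induction k with
  | zero => simpa using Rel.C (1 : K)
  | succ k ih =>
    rw [pow_succ, pow_succ, Nat.succ_mul]; exact ih.mul h

lemma Rel.sum {ι : Type*} {n : ℕ} (t : Finset ι) (p a : ι → MvPolynomial (Fin 3) K)
    (h : ∀ i ∈ t, Rel n (p i) (a i)) : Rel n (∑ i ∈ t, p i) (∑ i ∈ t, a i) := by
  classical
  induction t using Finset.induction_on with
  | empty => simpa using Rel.zero n
  | insert i t hi ih =>
    rw [Finset.sum_insert hi, Finset.sum_insert hi]
    exact (h i (by simp)).add (ih fun j hj => h j (by simp [hj]))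

lemma Rel.aeval {N e : ℕ} {f a : Fin 3 → MvPolynomial (Fin 3) K} (h : ∀ i, Rel N (f i) (a i))
    {p : MvPolynomial (Fin 3) K} (hp : p.IsHomogeneous e) :
    Rel (e * N) (aeval f p) (aeval a p) := by
  rw [aeval_def, aeval_def, eval₂_eq', eval₂_eq']
  refine Rel.sum _ _ _ fun s hs => ?_
  have hs' : s.degree = e := by
    rw [Finsupp.degree_eq_weight_one]; exact hp (mem_support_iff.1 hs)
  have : e * N = 0 + (s 0 * N + s 1 * N + s 2 * N) := by
    rw [← hs', Finsupp.degree_eq_sum, Fin.sum_univ_three]; ring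
  rw [this, Fin.prod_univ_three, Fin.prod_univ_three]
  exact (Rel.C _).mul ((((h 0).pow _).mul ((h 1).pow _)).mul ((h 2).pow _))

lemma Rel.component {n : ℕ} {p a : MvPolynomial (Fin 3) K} (h : Rel n p a) :
    homogeneousComponent n p = a := by
  have : p = a + (p - a) := by ring
  rw [this, map_add, h.2.component, add_zero, homogeneousComponent_eq_self h.1]

lemma Rel.of_totalDegree {n : ℕ} {p : MvPolynomial (Fin 3) K} (h : p.totalDegree ≤ n) :
    Rel n p (homogeneousComponent n p) := by
  refine ⟨homogeneousComponent_isHomogeneous _ _, fun s hs => ?_⟩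
  rw [mem_support_iff, coeff_sub, coeff_homogeneousComponent] at hs
  split_ifs at hs with hn
  · simp at hs
  · have := le_totalDegree' (mem_support_iff.2 (by simpa using hs) : s ∈ p.support)
    omega

lemma totalDegree_pderiv_le' (i : Fin 3) (p : MvPolynomial (Fin 3) K) :
    (pderiv i p).totalDegree ≤ p.totalDegree - 1 := by
  refine totalDegree_le_of fun s hs => ?_
  rw [mem_support_iff] at hs
  have hc : coeff (s + Finsupp.single i 1) p ≠ 0 := by
    intro h0
    apply hs
    rw [coeff_pderiv, h0]; simp
  have := le_totalDegree' (mem_support_iff.2 hc)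
  rw [map_add, Finsupp.degree_single] at this
  omega

lemma jac_expand (Ω f g : MvPolynomial (Fin 3) K) : jacBracket Ω f g =
    (pderiv 0 f * pderiv 1 g - pderiv 1 f * pderiv 0 g) * pderiv 2 Ω
    + (pderiv 1 f * pderiv 2 g - pderiv 2 f * pderiv 1 g) * pderiv 0 Ω
    + (pderiv 2 f * pderiv 0 g - pderiv 0 f * pderiv 2 g) * pderiv 1 Ω := by
  simp [jacBracket, Matrix.det_fin_three]; ring

lemma jac_totalDegree {Ω f g : MvPolynomial (Fin 3) K} {d N : ℕ} (hΩ : Ω.IsHomogeneous d)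
    (hf : f.totalDegree ≤ N) (hg : g.totalDegree ≤ N) :
    (jacBracket Ω f g).totalDegree ≤ 2 * (N - 1) + (d - 1) := by
  have hf' : ∀ i, (pderiv i f).totalDegree ≤ N - 1 := fun i =>
    (totalDegree_pderiv_le' i f).trans (by omega)
  have hg' : ∀ i, (pderiv i g).totalDegree ≤ N - 1 := fun i =>
    (totalDegree_pderiv_le' i g).trans (by omega)
  have hO : ∀ i, (pderiv i Ω).totalDegree ≤ d - 1 := fun i => (hΩ.pderiv).totalDegree_le
  have key : ∀ i j k, ((pderiv i f * pderiv j g - pderiv j f * pderiv i g)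
      * pderiv k Ω).totalDegree ≤ 2 * (N - 1) + (d - 1) := by
    intro i j k
    refine (totalDegree_mul _ _).trans (add_le_add ?_ (hO k))
    refine (totalDegree_sub _ _).trans (max_le ?_ ?_)
    · exact (totalDegree_mul _ _).trans (by have := hf' i; have := hg' j; omega)
    · exact (totalDegree_mul _ _).trans (by have := hf' j; have := hg' i; omega)
  rw [jac_expand]
  refine (totalDegree_add _ _).trans (max_le ((totalDegree_add _ _).trans (max_le ?_ ?_)) ?_)
  · exact key 0 1 2
  · exact key 1 2 0
  · exact key 2 0 1
end
end PotDix
namespace PotDix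
open MvPolynomial
attribute [local instance] MvPolynomial.gradedAlgebra

lemma squarefree_of_pow_mem {K : Type*} [Field K] {Ω : MvPolynomial (Fin 3) K} {M : ℕ}
    (hM : ∀ i, (X i : MvPolynomial (Fin 3) K) ^ M ∈
      Ideal.span {pderiv (0 : Fin 3) Ω, pderiv 1 Ω, pderiv 2 Ω}) : Squarefree Ω := by
  intro p hp
  obtain ⟨q, hq⟩ := hp
  have hd : ∀ i, p ∣ pderiv i Ω := by
    intro i
    rw [hq]
    simp only [Derivation.leibniz, smul_eq_mul]
    exact ⟨p * pderiv i q + q * (pderiv i p + pderiv i p), by ring⟩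
  have hle : Ideal.span {pderiv (0 : Fin 3) Ω, pderiv 1 Ω, pderiv 2 Ω} ≤ Ideal.span {p} := by
    rw [Ideal.span_le]
    rintro x (rfl | rfl | rfl) <;> exact Ideal.mem_span_singleton.2 (hd _)
  have h0 : p ∣ X 0 ^ M := Ideal.mem_span_singleton.1 (hle (hM 0))
  have h1 : p ∣ X 1 ^ M := Ideal.mem_span_singleton.1 (hle (hM 1))
  have hrel : IsRelPrime (X 0 ^ M : MvPolynomial (Fin 3) K) (X 1 ^ M) := by
    apply IsRelPrime.pow
    have p0 : Prime (X 0 : MvPolynomial (Fin 3) K) := X_prime (i := 0)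
    rw [p0.irreducible.isRelPrime_iff_not_dvd]
    rw [X_dvd_X]
    simp
  exact hrel h0 h1

lemma exists_pow_mem {𝕜 : Type*} [Field 𝕜] {Ω : MvPolynomial (Fin 3) 𝕜} {d : ℕ}
    (hhom : Ω.IsHomogeneous d) (hiso : HasIsolatedSingularity Ω) :
    ∃ M : ℕ, ∀ i, (X i : MvPolynomial (Fin 3) 𝕜) ^ M ∈
      Ideal.span {pderiv (0 : Fin 3) Ω, pderiv 1 Ω, pderiv 2 Ω} := by
  set J := Ideal.span {pderiv (0 : Fin 3) Ω, pderiv 1 Ω, pderiv 2 Ω} with hJ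
  have hJh : J.IsHomogeneous (homogeneousSubmodule (Fin 3) 𝕜) := by
    apply Ideal.homogeneous_span
    rintro x (rfl | rfl | rfl) <;> exact ⟨d - 1, hhom.pderiv⟩
  have : FiniteDimensional 𝕜 (MvPolynomial (Fin 3) 𝕜 ⧸ J) := hiso
  have key : ∀ i, ∃ M : ℕ, (X i : MvPolynomial (Fin 3) 𝕜) ^ M ∈ J := by
    intro i
    obtain ⟨p, hp0, hp⟩ := (Algebra.IsAlgebraic.isAlgebraic (R := 𝕜)
      (Ideal.Quotient.mk J (X i)))
    have hmem : Polynomial.aeval (X i : MvPolynomial (Fin 3) 𝕜) p ∈ J := by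
      rw [← Ideal.Quotient.eq_zero_iff_mem, ← hp]
      exact (Polynomial.aeval_algHom_apply (Ideal.Quotient.mkₐ 𝕜 J) (X i) p).symm
    refine ⟨p.natDegree, ?_⟩
    have h2 := homogeneousComponent_mem_of_mem hJh hmem p.natDegree
    have h3 : homogeneousComponent p.natDegree
        (Polynomial.aeval (X i : MvPolynomial (Fin 3) 𝕜) p)
        = C p.leadingCoeff * X i ^ p.natDegree := by
      rw [Polynomial.aeval_eq_sum_range, map_sum, Finset.sum_eq_single p.natDegree]
      · rw [smul_eq_C_mul]
        exact homogeneousComponent_eq_self (by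
          simpa using (isHomogeneous_C (Fin 3) _).mul (isHomogeneous_X_pow (R := 𝕜) i p.natDegree))
      · intro b _ hb
        rw [smul_eq_C_mul, homogeneousComponent_C_mul,
          homogeneousComponent_of_mem (isHomogeneous_X_pow i b), if_neg hb.symm, mul_zero]
      · simp
    rw [h3] at h2
    have h4 := J.mul_mem_left (C p.leadingCoeff⁻¹) h2
    rwa [← mul_assoc, ← C_mul, inv_mul_cancel₀ (by simpa using hp0), C_1, one_mul] at h4
  choose m hm using key
  refine ⟨m 0 + m 1 + m 2, fun i => ?_⟩
  have hle : m i ≤ m 0 + m 1 + m 2 := by fin_cases i <;> simp <;> omega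
  exact J.pow_mem_of_pow_mem (hm i) hle

lemma totalDegree_potential {K : Type*} [Field K] {Ω : MvPolynomial (Fin 3) K} {d : ℕ}
    (hhom : Ω.IsHomogeneous d) (hd : 4 ≤ d) (h0 : Ω ≠ 0) (ξ : K) :
    (Ω - C ξ).totalDegree = d := by
  rw [sub_eq_add_neg, totalDegree_add_eq_left_of_totalDegree_lt, hhom.totalDegree h0]
  rw [hhom.totalDegree h0, totalDegree_neg, totalDegree_C]; omega

/-- leading terms of partial derivatives are multiples of the potential -/
lemma lead_mem {K : Type*} [Field K] {Ω : MvPolynomial (Fin 3) K} {d : ℕ}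
    (hhom : Ω.IsHomogeneous d) (hd : 4 ≤ d) (h0 : Ω ≠ 0) (ξ : K) {D : ℕ}
    {p a j : MvPolynomial (Fin 3) K} (hD : 0 < D) (hr : Rel D p a) (hj : j.totalDegree < D)
    (hdiv : Ω - C ξ ∣ p - j) : Ω ∣ a := by
  obtain ⟨h, hh⟩ := hdiv
  have hdeg : (p - j).totalDegree ≤ D :=
    (totalDegree_sub _ _).trans (max_le hr.totalDegree_le hj.le)
  have hO : (Ω - C ξ).totalDegree = d := totalDegree_potential hhom hd h0 ξ
  have hO0 : Ω - C ξ ≠ 0 := by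
    intro h; rw [h, totalDegree_zero] at hO; omega
  have hhlt : h.totalDegree < D := by
    by_cases hh0 : h = 0
    · simpa [hh0] using hD
    · rw [hh, totalDegree_mul_of_isDomain hO0 hh0] at hdeg
      omega
  have e : homogeneousComponent D (p - j) = a := by
    rw [map_sub, hr.component, homogeneousComponent_eq_zero _ _ hj, sub_zero]
  rw [hh, sub_mul, map_sub, homogeneousComponent_C_mul, homogeneousComponent_eq_zero _ _ hhlt,
    mul_zero, sub_zero] at e
  have hI : (Ideal.span {Ω}).IsHomogeneous (homogeneousSubmodule (Fin 3) K) := by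
    apply Ideal.homogeneous_span
    rintro x rfl
    exact ⟨d, hhom⟩
  have := homogeneousComponent_mem_of_mem hI
    (Ideal.mem_span_singleton.2 (Dvd.intro h rfl) : Ω * h ∈ Ideal.span {Ω}) D
  rw [e] at this
  exact Ideal.mem_span_singleton.1 this

lemma step {K : Type*} [Field K] {Ω : MvPolynomial (Fin 3) K} {d M : ℕ}
    (hhom : Ω.IsHomogeneous d) (hd : 4 ≤ d)
    (hM : ∀ i, (X i : MvPolynomial (Fin 3) K) ^ M ∈
      Ideal.span {pderiv (0 : Fin 3) Ω, pderiv 1 Ω, pderiv 2 Ω}) (ξ : K)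
    {N : ℕ} (hN : 1 ≤ N) (f : Fin 3 → MvPolynomial (Fin 3) K)
    (hf : ∀ i, (f i).totalDegree ≤ N + 1)
    (e0 : Ω - C ξ ∣ aeval f (pderiv 0 Ω) - jacBracket Ω (f 1) (f 2))
    (e1 : Ω - C ξ ∣ aeval f (pderiv 1 Ω) - jacBracket Ω (f 2) (f 0))
    (e2 : Ω - C ξ ∣ aeval f (pderiv 2 Ω) - jacBracket Ω (f 0) (f 1)) (i : Fin 3) :
    ∃ f' : MvPolynomial (Fin 3) K, f'.totalDegree ≤ N ∧ Ω - C ξ ∣ f i - f' := by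
  have hsq := squarefree_of_pow_mem hM
  have h0 : Ω ≠ 0 := hsq.ne_zero
  set a : Fin 3 → MvPolynomial (Fin 3) K := fun i => homogeneousComponent (N + 1) (f i) with ha
  have hr : ∀ i, Rel (N + 1) (f i) (a i) := fun i => Rel.of_totalDegree (hf i)
  have hlt : 2 * (N + 1 - 1) + (d - 1) < (d - 1) * (N + 1) := by
    obtain ⟨e, rfl⟩ := Nat.exists_eq_add_of_le hd
    have : 4 + e - 1 = 3 + e := by omega
    rw [this]
    simp only [Nat.add_sub_cancel]
    nlinarith
  have hD : 0 < (d - 1) * (N + 1) := by omega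
  have k0 : Ω ∣ aeval a (pderiv 0 Ω) := lead_mem hhom hd h0 ξ hD (Rel.aeval hr hhom.pderiv)
    (lt_of_le_of_lt (jac_totalDegree hhom (hf 1) (hf 2)) hlt) e0
  have k1 : Ω ∣ aeval a (pderiv 1 Ω) := lead_mem hhom hd h0 ξ hD (Rel.aeval hr hhom.pderiv)
    (lt_of_le_of_lt (jac_totalDegree hhom (hf 2) (hf 0)) hlt) e1
  have k2 : Ω ∣ aeval a (pderiv 2 Ω) := lead_mem hhom hd h0 ξ hD (Rel.aeval hr hhom.pderiv)
    (lt_of_le_of_lt (jac_totalDegree hhom (hf 0) (hf 1)) hlt) e2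
  have hle : Ideal.span {pderiv (0 : Fin 3) Ω, pderiv 1 Ω, pderiv 2 Ω} ≤
      (Ideal.span {Ω}).comap (aeval a : MvPolynomial (Fin 3) K →ₐ[K] _) := by
    rw [Ideal.span_le]
    rintro x (rfl | rfl | rfl)
    · exact Ideal.mem_span_singleton.2 k0
    · exact Ideal.mem_span_singleton.2 k1
    · exact Ideal.mem_span_singleton.2 k2
  have hpow : Ω ∣ a i ^ M := by
    have := hle (hM i)
    rw [Ideal.mem_comap, map_pow, aeval_X] at this
    exact Ideal.mem_span_singleton.1 this
  obtain ⟨q, hq⟩ : Ω ∣ a i := hsq.isRadical M _ hpow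
  have hqdeg : q.totalDegree < N + 1 := by
    by_cases hq0 : q = 0
    · simp [hq0]
    · have h1 : (a i).totalDegree ≤ N + 1 := (hr i).1.totalDegree_le
      rw [hq, totalDegree_mul_of_isDomain h0 hq0, hhom.totalDegree h0] at h1
      omega
  refine ⟨(f i - a i) + C ξ * q, ?_, q, ?_⟩
  · refine (totalDegree_add _ _).trans (max_le (hr i).2.totalDegree_le ?_)
    refine (totalDegree_mul _ _).trans ?_
    rw [totalDegree_C]; omega
  · rw [hq]; ring
end PotDix
namespace PotDix
open MvPolynomial

section
variable {𝕜 K : Type*} [Field 𝕜] [Field K] [Algebra 𝕜 K]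

/-- The projection as an algebra map. -/
noncomputable def mkA (Ω : MvPolynomial (Fin 3) 𝕜) (ξ : 𝕜) :
    MvPolynomial (Fin 3) 𝕜 →ₐ[𝕜] PQuot 𝕜 Ω ξ :=
  Ideal.Quotient.mkₐ 𝕜 (Ideal.span {Ω - MvPolynomial.C ξ})

/-- The projection `K[x,y,z] → K ⊗ P_{Ω-ξ}`. -/
noncomputable def proj (K : Type*) [Field K] [Algebra 𝕜 K]
    (Ω : MvPolynomial (Fin 3) 𝕜) (ξ : 𝕜) :
    MvPolynomial (Fin 3) K →ₐ[K] K ⊗[𝕜] PQuot 𝕜 Ω ξ :=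
  (Algebra.TensorProduct.map (AlgHom.id K K) (mkA Ω ξ)).comp
    (algebraTensorAlgEquiv 𝕜 K).symm.toAlgHom

lemma proj_map (Ω : MvPolynomial (Fin 3) 𝕜) (ξ : 𝕜) (p : MvPolynomial (Fin 3) 𝕜) :
    proj K Ω ξ (map (algebraMap 𝕜 K) p) = 1 ⊗ₜ PQuot.mk Ω ξ p := by
  have : (algebraTensorAlgEquiv 𝕜 K).symm (map (algebraMap 𝕜 K) p) = 1 ⊗ₜ p :=
    algebraTensorAlgEquiv_symm_map 𝕜 K p
  change Algebra.TensorProduct.map (AlgHom.id K K) (mkA Ω ξ)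
    ((algebraTensorAlgEquiv 𝕜 K).symm (map (algebraMap 𝕜 K) p)) = _
  rw [this]
  rfl

lemma proj_X (Ω : MvPolynomial (Fin 3) 𝕜) (ξ : 𝕜) (i : Fin 3) :
    proj K Ω ξ (X i) = 1 ⊗ₜ PQuot.mk Ω ξ (X i) := by
  rw [← proj_map, map_X]

lemma proj_C (Ω : MvPolynomial (Fin 3) 𝕜) (ξ : 𝕜) (c : K) :
    proj K Ω ξ (C c) = c ⊗ₜ 1 := by
  have := (proj K Ω ξ).commutes c
  exact this

lemma mkA_surj (Ω : MvPolynomial (Fin 3) 𝕜) (ξ : 𝕜) : Function.Surjective (mkA Ω ξ) :=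
  Ideal.Quotient.mk_surjective

lemma proj_surj (Ω : MvPolynomial (Fin 3) 𝕜) (ξ : 𝕜) :
    Function.Surjective (proj K Ω ξ) := by
  refine Function.Surjective.comp (g := Algebra.TensorProduct.map (AlgHom.id K K) (mkA Ω ξ)) ?_
    (algebraTensorAlgEquiv 𝕜 K).symm.surjective
  exact LinearMap.lTensor_surjective K (g := (mkA Ω ξ).toLinearMap) (mkA_surj Ω ξ)

lemma proj_ker (Ω : MvPolynomial (Fin 3) 𝕜) (ξ : 𝕜) (p : MvPolynomial (Fin 3) K) :
    proj K Ω ξ p = 0 ↔ map (algebraMap 𝕜 K) Ω - C (algebraMap 𝕜 K ξ) ∣ p := by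
  have hm : map (algebraMap 𝕜 K) Ω - C (algebraMap 𝕜 K ξ) = map (algebraMap 𝕜 K) (Ω - C ξ) := by
    simp
  rw [hm]
  have hz : mkA Ω ξ (Ω - C ξ) = 0 :=
    Ideal.Quotient.eq_zero_iff_mem.2 (Ideal.mem_span_singleton_self _)
  constructor
  · intro h
    have h1 : (algebraTensorAlgEquiv 𝕜 K).symm p ∈
        RingHom.ker (Algebra.TensorProduct.map (AlgHom.id 𝕜 K) (mkA Ω ξ)) := h
    rw [Algebra.TensorProduct.lTensor_ker _ (mkA_surj Ω ξ)] at h1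
    have h2 : RingHom.ker (mkA Ω ξ) = Ideal.span {Ω - C ξ} :=
      Ideal.Quotient.mkₐ_ker 𝕜 _
    rw [h2, Ideal.map_span, Set.image_singleton, Ideal.mem_span_singleton] at h1
    have h3 := map_dvd (algebraTensorAlgEquiv (σ := Fin 3) 𝕜 K) h1
    rw [AlgEquiv.apply_symm_apply] at h3
    simpa using h3
  · rintro ⟨q, rfl⟩
    rw [map_mul, proj_map]
    have : PQuot.mk Ω ξ (Ω - C ξ) = 0 := hz
    rw [this, TensorProduct.tmul_zero, zero_mul]

lemma jac_map (Ω f g : MvPolynomial (Fin 3) 𝕜) :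
    map (algebraMap 𝕜 K) (jacBracket Ω f g) =
    jacBracket (map (algebraMap 𝕜 K) Ω) (map (algebraMap 𝕜 K) f) (map (algebraMap 𝕜 K) g) := by
  simp only [jac_expand, pderiv_map, map_add, map_sub, map_mul]

lemma jac_swap {R : Type*} [CommRing R] (Ω f g : MvPolynomial (Fin 3) R) :
    jacBracket Ω f g = - jacBracket Ω g f := by
  rw [jac_expand, jac_expand]; ring

lemma jac_mul {R : Type*} [CommRing R] (Ω f g h : MvPolynomial (Fin 3) R) :
    jacBracket Ω f (g * h) = jacBracket Ω f g * h + g * jacBracket Ω f h := by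
  simp only [jac_expand, Derivation.leibniz, smul_eq_mul]; ring

lemma jac_add {R : Type*} [CommRing R] (Ω f g h : MvPolynomial (Fin 3) R) :
    jacBracket Ω f (g + h) = jacBracket Ω f g + jacBracket Ω f h := by
  simp only [jac_expand, map_add]; ring

lemma jac_C {R : Type*} [CommRing R] (Ω f : MvPolynomial (Fin 3) R) (c : R) :
    jacBracket Ω f (C c) = 0 := by
  simp [jac_expand]

end

section
variable {R A : Type*} [CommRing R] [CommRing A] [Algebra R A] (P : PoissonStructure R A)

lemma br_add (a b c : A) : P.bracket a (b + c) = P.bracket a b + P.bracket a c := by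
  rw [P.antisymm a (b + c), P.add_left, P.antisymm b a, P.antisymm c a]; ring

lemma br_one (a : A) : P.bracket a 1 = 0 := by
  have := P.leibniz a 1 1
  simpa using this

lemma one_br (a : A) : P.bracket 1 a = 0 := by
  rw [P.antisymm, br_one, neg_zero]

end

section
variable {𝕜 K : Type*} [Field 𝕜] [Field K] [Algebra 𝕜 K] (PK : PoissonStructure 𝕜 K)
    (Ω : MvPolynomial (Fin 3) 𝕜) (ξ : 𝕜)
    (P : PoissonStructure 𝕜 (PQuot 𝕜 Ω ξ))
    (PT : PoissonStructure 𝕜 (K ⊗[𝕜] PQuot 𝕜 Ω ξ))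

/-- Two derivations along `proj` agreeing on generators agree. -/
lemma br_ext (t : K ⊗[𝕜] PQuot 𝕜 Ω ξ) (f : MvPolynomial (Fin 3) K)
    (hC : ∀ c : K, PT.bracket t (proj K Ω ξ (C c)) = 0)
    (hX : ∀ j, PT.bracket t (proj K Ω ξ (X j)) =
      proj K Ω ξ (jacBracket (map (algebraMap 𝕜 K) Ω) f (X j)))
    (h : MvPolynomial (Fin 3) K) :
    PT.bracket t (proj K Ω ξ h) = proj K Ω ξ (jacBracket (map (algebraMap 𝕜 K) Ω) f h) := by
  induction h using MvPolynomial.induction_on with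
  | C c => rw [hC, jac_C, map_zero]
  | add p q hp hq => rw [map_add, br_add, hp, hq, jac_add, map_add]
  | mul_X p j hp =>
    rw [map_mul, PT.leibniz, hp, hX, jac_mul, map_add, map_mul, map_mul]

lemma br_X_X (hP : IsInducedBracket Ω ξ P) (hPT : IsTensorBracket PK P PT) (i j : Fin 3) : PT.bracket (proj K Ω ξ (X i)) (proj K Ω ξ (X j)) =
    proj K Ω ξ (jacBracket (map (algebraMap 𝕜 K) Ω) (X i) (X j)) := by
  rw [proj_X, proj_X, hPT, one_br, TensorProduct.zero_tmul, zero_add, hP, one_mul, ← proj_map,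
    jac_map, map_X, map_X]

lemma br_X_C (hPT : IsTensorBracket PK P PT) (i : Fin 3) (c : K) : PT.bracket (proj K Ω ξ (X i)) (proj K Ω ξ (C c)) = 0 := by
  rw [proj_X, proj_C, hPT, one_br, br_one, TensorProduct.zero_tmul, TensorProduct.tmul_zero,
    zero_add]

lemma br_proj (hP : IsInducedBracket Ω ξ P) (hPT : IsTensorBracket PK P PT) (f : MvPolynomial (Fin 3) K)
    (hC : ∀ c : K, PT.bracket (proj K Ω ξ f) (proj K Ω ξ (C c)) = 0)
    (h : MvPolynomial (Fin 3) K) :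
    PT.bracket (proj K Ω ξ f) (proj K Ω ξ h) =
      proj K Ω ξ (jacBracket (map (algebraMap 𝕜 K) Ω) f h) := by
  refine br_ext Ω ξ PT _ f hC (fun j => ?_) h
  rw [PT.antisymm, br_ext Ω ξ PT _ (X j) (br_X_C PK Ω ξ P PT hPT j)
    (br_X_X PK Ω ξ P PT hP hPT j), jac_swap _ f, map_neg]

end

lemma jac_01 {R : Type*} [CommRing R] (Ω : MvPolynomial (Fin 3) R) :
    jacBracket Ω (X 0) (X 1) = pderiv 2 Ω := by
  simp [jac_expand, pderiv_X]
lemma jac_12 {R : Type*} [CommRing R] (Ω : MvPolynomial (Fin 3) R) :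
    jacBracket Ω (X 1) (X 2) = pderiv 0 Ω := by
  simp [jac_expand, pderiv_X]
lemma jac_20 {R : Type*} [CommRing R] (Ω : MvPolynomial (Fin 3) R) :
    jacBracket Ω (X 2) (X 0) = pderiv 1 Ω := by
  simp [jac_expand, pderiv_X]

/-- A polynomial of degree at most one is affine. -/
lemma affine {K : Type*} [Field K] (f : MvPolynomial (Fin 3) K) (hf : f.totalDegree ≤ 1) :
    f ∈ Submodule.span K (Set.insert 1 (Set.range (X : Fin 3 → MvPolynomial (Fin 3) K))) := by
  rw [f.as_sum]
  refine Submodule.sum_mem _ fun s hs => ?_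
  have hd : s.degree ≤ 1 := (le_totalDegree' hs).trans hf
  rw [monomial_eq, ← smul_eq_C_mul]
  refine Submodule.smul_mem _ _ (Submodule.subset_span ?_)
  rcases Nat.lt_or_ge s.degree 1 with h | h
  · have : s = 0 := by
      rw [← Finsupp.degree_eq_zero_iff]; omega
    left; simp [this]
  · obtain ⟨i, rfl⟩ : ∃ i, s = Finsupp.single i 1 := by
      have hs0 : s ≠ 0 := by rintro rfl; simp at h
      obtain ⟨i, hi⟩ := Finsupp.ne_iff.1 hs0
      have hle : Finsupp.single i 1 ≤ s := by
        rw [Finsupp.single_le_iff]; exact Nat.one_le_iff_ne_zero.2 hi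
      obtain ⟨u, rfl⟩ := exists_add_of_le hle
      rw [map_add, Finsupp.degree_single] at hd
      have : u = 0 := by
        rw [← Finsupp.degree_eq_zero_iff]; omega
      exact ⟨i, by rw [this, add_zero]⟩
    right; exact ⟨i, by simp⟩

end PotDix
/-- Lemma 3.4: for an i.s. potential `Ω` of degree `≥ 4` and a Poisson field `K`, every
injective bracket-preserving `K`-algebra endomorphism of `K ⊗ P_{Ω-ξ}` is bijective. -/
theorem baseChange_potential_injective_endo_bijective
    {𝕜 K : Type*} [Field 𝕜] [IsAlgClosed 𝕜] [CharZero 𝕜]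
    [Field K] [Algebra 𝕜 K] (PK : PoissonStructure 𝕜 K)
    (Ω : MvPolynomial (Fin 3) 𝕜) (d : ℕ) (hhom : Ω.IsHomogeneous d) (hd : 4 ≤ d)
    (hiso : HasIsolatedSingularity Ω) (ξ : 𝕜)
    (P : PoissonStructure 𝕜 (PQuot 𝕜 Ω ξ)) (hP : IsInducedBracket Ω ξ P)
    (PT : PoissonStructure 𝕜 (K ⊗[𝕜] PQuot 𝕜 Ω ξ)) (hPT : IsTensorBracket PK P PT)
    (g : (K ⊗[𝕜] PQuot 𝕜 Ω ξ) →ₐ[K] K ⊗[𝕜] PQuot 𝕜 Ω ξ)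
    (hg : ∀ x y, g (PT.bracket x y) = PT.bracket (g x) (g y))
    (hginj : Function.Injective g) :
    Function.Bijective g := by
  refine ⟨hginj, ?_⟩
  let π := PotDix.proj K Ω ξ
  let W := MvPolynomial.map (algebraMap 𝕜 K) Ω
  let X : Fin 3 → MvPolynomial (Fin 3) K := MvPolynomial.X
  have hW : W.IsHomogeneous d := hhom.map _
  obtain ⟨M, hM⟩ := PotDix.exists_pow_mem hhom hiso
  have hMK : ∀ i, (MvPolynomial.X i : MvPolynomial (Fin 3) K) ^ M ∈
      Ideal.span {MvPolynomial.pderiv (0 : Fin 3) W, MvPolynomial.pderiv 1 W,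
        MvPolynomial.pderiv 2 W} := by
    intro i
    have h := Ideal.mem_map_of_mem (MvPolynomial.map (algebraMap 𝕜 K)) (hM i)
    rw [Ideal.map_span, map_pow, MvPolynomial.map_X] at h
    simpa [Set.image_insert_eq, W, MvPolynomial.pderiv_map] using h
  have hgC : ∀ c : K, g (π (MvPolynomial.C c)) = π (MvPolynomial.C c) := by
    intro c
    have : π (MvPolynomial.C c) = algebraMap K _ c := π.commutes c
    rw [this, g.commutes]
  -- lifting images and the bracket relations
  have hgp : ∀ f : Fin 3 → MvPolynomial (Fin 3) K, (∀ i, π (f i) = g (π (X i))) →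
      ∀ p : MvPolynomial (Fin 3) K, g (π p) = π (MvPolynomial.aeval f p) := by
    intro f hf p
    have : g.comp π = π.comp (MvPolynomial.aeval f) := by
      apply MvPolynomial.algHom_ext
      intro i
      simp [hf, X]
    exact DFunLike.congr_fun this p
  have hrel : ∀ f : Fin 3 → MvPolynomial (Fin 3) K, (∀ i, π (f i) = g (π (X i))) →
      ∀ i j, W - MvPolynomial.C (algebraMap 𝕜 K ξ) ∣
        MvPolynomial.aeval f (jacBracket W (X i) (X j)) - jacBracket W (f i) (f j) := by
    intro f hf i j
    rw [← PotDix.proj_ker, map_sub, sub_eq_zero]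
    have hc : ∀ c : K, PT.bracket (π (f i)) (π (MvPolynomial.C c)) = 0 := by
      intro c
      rw [hf, ← hgC c, ← hg, PotDix.br_X_C PK Ω ξ P PT hPT i c, map_zero]
    rw [← PotDix.br_proj PK Ω ξ P PT hP hPT (f i) hc (f j)]
    change π _ = PT.bracket (π (f i)) (π (f j))
    rw [hf, hf, ← hg, ← hgp f hf, PotDix.br_X_X PK Ω ξ P PT hP hPT i j]
  -- degree reduction
  have hred : ∀ N : ℕ, (∃ f : Fin 3 → MvPolynomial (Fin 3) K, (∀ i, π (f i) = g (π (X i))) ∧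
      ∀ i, (f i).totalDegree ≤ N + 1) →
      ∃ f : Fin 3 → MvPolynomial (Fin 3) K, (∀ i, π (f i) = g (π (X i))) ∧
      ∀ i, (f i).totalDegree ≤ 1 := by
    intro N
    induction N with
    | zero => exact fun h => h
    | succ N ih =>
      rintro ⟨f, hf, hdeg⟩
      have h0 := hrel f hf 1 2
      have h1 := hrel f hf 2 0
      have h2 := hrel f hf 0 1
      rw [PotDix.jac_12] at h0
      rw [PotDix.jac_20] at h1
      rw [PotDix.jac_01] at h2
      choose f' hf'd hf' using
        PotDix.step hW hd hMK (algebraMap 𝕜 K ξ) (Nat.le_add_left 1 N) f hdeg h0 h1 h2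
      refine ih ⟨f', fun i => ?_, hf'd⟩
      rw [← hf i]
      have := (PotDix.proj_ker Ω ξ _).2 (hf' i)
      rw [map_sub, sub_eq_zero] at this
      exact this.symm
  obtain ⟨f, hf, hdeg⟩ : ∃ f : Fin 3 → MvPolynomial (Fin 3) K,
      (∀ i, π (f i) = g (π (X i))) ∧ ∀ i, (f i).totalDegree ≤ 1 := by
    choose f hf using fun i => PotDix.proj_surj (K := K) Ω ξ (g (π (X i)))
    refine hred ((f 0).totalDegree + (f 1).totalDegree + (f 2).totalDegree) ⟨f, hf, fun i => ?_⟩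
    fin_cases i <;> simp <;> omega
  -- finite-dimensional linear algebra
  let S : Set (MvPolynomial (Fin 3) K) := Set.insert 1 (Set.range X)
  have hSfin : S.Finite := (Set.finite_range X).insert 1
  let V : Submodule K (K ⊗[𝕜] PQuot 𝕜 Ω ξ) := (Submodule.span K S).map π.toLinearMap
  have : FiniteDimensional K V := by
    have : FiniteDimensional K (Submodule.span K S) := FiniteDimensional.span_of_finite K hSfin
    infer_instance
  have hgV : ∀ v ∈ V, g.toLinearMap v ∈ V := by
    have hle : V ≤ V.comap g.toLinearMap := by
      rw [Submodule.map_le_iff_le_comap, Submodule.span_le]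
      rintro _ (rfl | ⟨i, rfl⟩)
      · refine ⟨1, Submodule.subset_span (Or.inl rfl), ?_⟩
        simp
      · exact ⟨f i, PotDix.affine (f i) (hdeg i), hf i⟩
    exact hle
  have hsurj : Function.Surjective (g.toLinearMap.restrict hgV) := by
    apply LinearMap.surjective_of_injective
    intro a b hab
    apply Subtype.ext
    exact hginj (congrArg Subtype.val hab)
  have hX : ∀ i, ∃ t, g t = π (X i) := by
    intro i
    obtain ⟨t, ht⟩ := hsurj ⟨π (X i), X i, Submodule.subset_span (Or.inr ⟨i, rfl⟩), rfl⟩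
    exact ⟨t, congrArg Subtype.val ht⟩
  choose t ht using hX
  intro y
  obtain ⟨p, rfl⟩ := PotDix.proj_surj (K := K) Ω ξ y
  refine ⟨MvPolynomial.aeval t p, ?_⟩
  have : g.comp (MvPolynomial.aeval t) = π := by
    apply MvPolynomial.algHom_ext
    intro i
    simp [ht, X]
  exact DFunLike.congr_fun this p
end
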